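/- There exist universal constants C_b > 0 and C > 0 such that the following holds for γ ∈ [1/2,1) and δ ∈ (0,1). For any fixed (s,a,b) ∈ 𝒮×𝒜×ℬ, with probability at least 1−δ over the dataset, on the event N(s,a,b) ≥ 1, simultaneously for every Ṽ : 𝒮 → [0, 1/(1−γ)] with min{ ‖Ṽ − V_pe^{−⋆}‖_∞, ‖Ṽ − V_pe^{+⋆}‖_∞ } ≤ 1/N one has: (i) |(P̂(·|s,a,b) − P(·|s,a,b))Ṽ| ≤ C·[ √( Var_{P̂(·|s,a,b)}(Ṽ)·log(N/((1−γ)δ)) / N(s,a,b) ) + log(N/((1−γ)δ)) / ((1−γ)N(s,a,b)) ]; and (ii) Var_{P̂(·|s,a,b)}(Ṽ) ≤ 2·Var_{P(·|s,a,b)}(Ṽ) + C·log(N/((1−γ)δ)) / ((1−γ)²N(s,a,b)). -/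

import Mathlib

open scoped BigOperators ENNReal Classical

noncomputable section

namespace ZSMG

variable {𝒮 𝒜 ℬ : Type} [Fintype 𝒮] [Fintype 𝒜] [Fintype ℬ]
  [DecidableEq 𝒮] [DecidableEq 𝒜] [DecidableEq ℬ]

/-- Expectation of `V : 𝒮 → ℝ` under the (sub)probability vector `p`. -/
def Pexp (p V : 𝒮 → ℝ) : ℝ := ∑ s', p s' * V s'

/-- Variance of `V` under `p`: `Var_p(V) = p(V∘V) − (pV)²`. -/
def varP (p V : 𝒮 → ℝ) : ℝ := Pexp p (fun s => V s * V s) - (Pexp p V) ^ 2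

/-- Payoff of mixed strategies `w, z` in the matrix game `M`. -/
def pay (M : 𝒜 → ℬ → ℝ) (w : 𝒜 → ℝ) (z : ℬ → ℝ) : ℝ :=
  ∑ a, ∑ b, w a * z b * M a b

/-- Value function associated with a Q-function: minimax value at each state. -/
def valQ (Q : 𝒮 → 𝒜 → ℬ → ℝ) (s : 𝒮) : ℝ :=
  ⨆ w : stdSimplex ℝ 𝒜, ⨅ z : stdSimplex ℝ ℬ, pay (Q s) w.1 z.1

/-- Sup norm over states. -/
def supNormS (f : 𝒮 → ℝ) : ℝ := ⨆ s, |f s|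

/-- Sup norm over state-action triples. -/
def supNormQ (f : 𝒮 → 𝒜 → ℬ → ℝ) : ℝ := ⨆ s, ⨆ a, ⨆ b, |f s a b|

/-- The Bernstein-style penalty `β(s,a,b;V)`; `n` is the count `N(s,a,b)` and
`p` is the row `P̂(·|s,a,b)` of the empirical kernel. -/
def penalty (γ δ Cb : ℝ) (N n : ℕ) (p V : 𝒮 → ℝ) : ℝ :=
  (if n = 0 then 1 / (1 - γ)
   else
     min
       (max (Real.sqrt (Cb * Real.log ((N : ℝ) / ((1 - γ) * δ)) * varP p V / (n : ℝ)))
         (2 * Cb * Real.log ((N : ℝ) / ((1 - γ) * δ)) / ((1 - γ) * (n : ℝ))))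
       (1 / (1 - γ))) + 4 / (N : ℝ)

/-- The pessimistic Bellman operator for the max-player. -/
def TpeMinus (γ δ Cb : ℝ) (N : ℕ) (n : 𝒮 → 𝒜 → ℬ → ℕ)
    (Ph : 𝒮 → 𝒜 → ℬ → 𝒮 → ℝ) (rh : 𝒮 → 𝒜 → ℬ → ℝ)
    (Q : 𝒮 → 𝒜 → ℬ → ℝ) : 𝒮 → 𝒜 → ℬ → ℝ := fun s a b =>
  max (rh s a b + γ * Pexp (Ph s a b) (valQ Q)
        - penalty γ δ Cb N (n s a b) (Ph s a b) (valQ Q)) 0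

/-- The pessimistic Bellman operator for the min-player. -/
def TpePlus (γ δ Cb : ℝ) (N : ℕ) (n : 𝒮 → 𝒜 → ℬ → ℕ)
    (Ph : 𝒮 → 𝒜 → ℬ → 𝒮 → ℝ) (rh : 𝒮 → 𝒜 → ℬ → ℝ)
    (Q : 𝒮 → 𝒜 → ℬ → ℝ) : 𝒮 → 𝒜 → ℬ → ℝ := fun s a b =>
  min (rh s a b + γ * Pexp (Ph s a b) (valQ Q)
        + penalty γ δ Cb N (n s a b) (Ph s a b) (valQ Q)) (1 / (1 - γ))

/-- Count `N(s,a,b)` of occurrences of `(s,a,b)` in the dataset `D`. -/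
def cnt {N : ℕ} (D : Fin N → 𝒮 × 𝒜 × ℬ × 𝒮) (s : 𝒮) (a : 𝒜) (b : ℬ) : ℕ :=
  (Finset.univ.filter fun i => (D i).1 = s ∧ (D i).2.1 = a ∧ (D i).2.2.1 = b).card

/-- Count of full transitions `(s,a,b,s')` in the dataset `D`. -/
def cntT {N : ℕ} (D : Fin N → 𝒮 × 𝒜 × ℬ × 𝒮) (s : 𝒮) (a : 𝒜) (b : ℬ) (s' : 𝒮) : ℕ :=
  (Finset.univ.filter fun i => D i = (s, a, b, s')).card

/-- Empirical transition kernel `P̂(·|s,a,b)` built from the dataset. -/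
def Phat {N : ℕ} (D : Fin N → 𝒮 × 𝒜 × ℬ × 𝒮) (s : 𝒮) (a : 𝒜) (b : ℬ) : 𝒮 → ℝ := fun s' =>
  if cnt D s a b = 0 then ((Fintype.card 𝒮 : ℝ))⁻¹
  else (cntT D s a b s' : ℝ) / (cnt D s a b : ℝ)

/-- Empirical reward `r̂` built from the dataset. -/
def rhat {N : ℕ} (r : 𝒮 → 𝒜 → ℬ → ℝ) (D : Fin N → 𝒮 × 𝒜 × ℬ × 𝒮)
    (s : 𝒮) (a : 𝒜) (b : ℬ) : ℝ :=
  if cnt D s a b = 0 then 0 else r s a b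

/-- Number of iterations `T = ⌈log(N/(1−γ))/log(1/γ)⌉` of VI-LCB-Game. -/
def Titer (γ : ℝ) (N : ℕ) : ℕ := ⌈Real.log ((N : ℝ) / (1 - γ)) / Real.log (1 / γ)⌉₊

/-- `Q_pe^− = Q⁻_T` produced by VI-LCB-Game on the dataset `D`. -/
def QpeMinus (γ δ Cb : ℝ) (r : 𝒮 → 𝒜 → ℬ → ℝ) {N : ℕ}
    (D : Fin N → 𝒮 × 𝒜 × ℬ × 𝒮) : 𝒮 → 𝒜 → ℬ → ℝ :=
  (TpeMinus γ δ Cb N (cnt D) (Phat D) (rhat r D))^[Titer γ N] (fun _ _ _ => 0)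

/-- `Q_pe^+ = Q⁺_T` produced by VI-LCB-Game on the dataset `D`. -/
def QpePlus (γ δ Cb : ℝ) (r : 𝒮 → 𝒜 → ℬ → ℝ) {N : ℕ}
    (D : Fin N → 𝒮 × 𝒜 × ℬ × 𝒮) : 𝒮 → 𝒜 → ℬ → ℝ :=
  (TpePlus γ δ Cb N (cnt D) (Phat D) (rhat r D))^[Titer γ N] (fun _ _ _ => 1 / (1 - γ))

/-- `(w,z)` is a (mixed) Nash equilibrium / saddle point of the matrix game `M`. -/
def IsMatrixNash (M : 𝒜 → ℬ → ℝ) (w : 𝒜 → ℝ) (z : ℬ → ℝ) : Prop :=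
  w ∈ stdSimplex ℝ 𝒜 ∧ z ∈ stdSimplex ℝ ℬ ∧
    (∀ w' ∈ stdSimplex ℝ 𝒜, pay M w' z ≤ pay M w z) ∧
    (∀ z' ∈ stdSimplex ℝ ℬ, pay M w z ≤ pay M w z')

/-- `μ` is a possible max-player output of the algorithm, given the final Q-estimate `Q`. -/
def IsOutputMax (Q : 𝒮 → 𝒜 → ℬ → ℝ) (μ : 𝒮 → 𝒜 → ℝ) : Prop :=
  ∀ s, ∃ z, IsMatrixNash (Q s) (μ s) z

/-- `ν` is a possible min-player output of the algorithm, given the final Q-estimate `Q`. -/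
def IsOutputMin (Q : 𝒮 → 𝒜 → ℬ → ℝ) (ν : 𝒮 → ℬ → ℝ) : Prop :=
  ∀ s, ∃ w, IsMatrixNash (Q s) w (ν s)

/-- `μ` is a stationary (Markov) policy. -/
def IsPolicy (μ : 𝒮 → 𝒜 → ℝ) : Prop := ∀ s, μ s ∈ stdSimplex ℝ 𝒜

/-- `P` is a probability transition kernel. -/
def IsKernel (P : 𝒮 → 𝒜 → ℬ → 𝒮 → ℝ) : Prop := ∀ s a b, P s a b ∈ stdSimplex ℝ 𝒮

/-- `r` is a reward function with values in `[0,1]`. -/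
def IsReward (r : 𝒮 → 𝒜 → ℬ → ℝ) : Prop := ∀ s a b, r s a b ∈ Set.Icc (0 : ℝ) 1

/-- `d` is a probability distribution over `𝒮 × 𝒜 × ℬ`. -/
def IsDist3 (d : 𝒮 → 𝒜 → ℬ → ℝ) : Prop :=
  (∀ s a b, 0 ≤ d s a b) ∧ (∑ s, ∑ a, ∑ b, d s a b) = 1

/-- Transition matrix `P^{μ,ν}` of the product policy `μ × ν`. -/
def Pmat (P : 𝒮 → 𝒜 → ℬ → 𝒮 → ℝ) (μ : 𝒮 → 𝒜 → ℝ) (ν : 𝒮 → ℬ → ℝ) :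
    Matrix 𝒮 𝒮 ℝ :=
  Matrix.of fun s s' => ∑ a, ∑ b, μ s a * ν s b * P s a b s'

/-- Reward vector `r^{μ,ν}` of the product policy `μ × ν`. -/
def rPol (r : 𝒮 → 𝒜 → ℬ → ℝ) (μ : 𝒮 → 𝒜 → ℝ) (ν : 𝒮 → ℬ → ℝ) : 𝒮 → ℝ :=
  fun s => ∑ a, ∑ b, μ s a * ν s b * r s a b

/-- Value function `V^{μ,ν} = (I − γP^{μ,ν})⁻¹ r^{μ,ν}`. -/
def Vpol (γ : ℝ) (P : 𝒮 → 𝒜 → ℬ → 𝒮 → ℝ) (r : 𝒮 → 𝒜 → ℬ → ℝ)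
    (μ : 𝒮 → 𝒜 → ℝ) (ν : 𝒮 → ℬ → ℝ) : 𝒮 → ℝ :=
  Matrix.mulVec ((1 : Matrix 𝒮 𝒮 ℝ) - γ • Pmat P μ ν)⁻¹ (rPol r μ ν)

/-- `V^{μ,⋆}(s) = min_ν V^{μ,ν}(s)`. -/
def VmuStar (γ : ℝ) (P : 𝒮 → 𝒜 → ℬ → 𝒮 → ℝ) (r : 𝒮 → 𝒜 → ℬ → ℝ)
    (μ : 𝒮 → 𝒜 → ℝ) : 𝒮 → ℝ := fun s =>
  ⨅ ν : {ν : 𝒮 → ℬ → ℝ // IsPolicy ν}, Vpol γ P r μ ν.1 s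

/-- `V^{⋆,ν}(s) = max_μ V^{μ,ν}(s)`. -/
def VstarNu (γ : ℝ) (P : 𝒮 → 𝒜 → ℬ → 𝒮 → ℝ) (r : 𝒮 → 𝒜 → ℬ → ℝ)
    (ν : 𝒮 → ℬ → ℝ) : 𝒮 → ℝ := fun s =>
  ⨆ μ : {μ : 𝒮 → 𝒜 → ℝ // IsPolicy μ}, Vpol γ P r μ.1 ν s

/-- `Q^{μ,ν}(s,a,b) = r(s,a,b) + γ P(·|s,a,b) V^{μ,ν}`. -/
def Qpol (γ : ℝ) (P : 𝒮 → 𝒜 → ℬ → 𝒮 → ℝ) (r : 𝒮 → 𝒜 → ℬ → ℝ)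
    (μ : 𝒮 → 𝒜 → ℝ) (ν : 𝒮 → ℬ → ℝ) : 𝒮 → 𝒜 → ℬ → ℝ := fun s a b =>
  r s a b + γ * Pexp (P s a b) (Vpol γ P r μ ν)

/-- `Q^{μ,⋆}(s,a,b) = min_ν Q^{μ,ν}(s,a,b)`. -/
def QmuStar (γ : ℝ) (P : 𝒮 → 𝒜 → ℬ → 𝒮 → ℝ) (r : 𝒮 → 𝒜 → ℬ → ℝ)
    (μ : 𝒮 → 𝒜 → ℝ) : 𝒮 → 𝒜 → ℬ → ℝ := fun s a b =>
  ⨅ ν : {ν : 𝒮 → ℬ → ℝ // IsPolicy ν}, Qpol γ P r μ ν.1 s a b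

/-- `Q^{⋆,ν}(s,a,b) = max_μ Q^{μ,ν}(s,a,b)`. -/
def QstarNu (γ : ℝ) (P : 𝒮 → 𝒜 → ℬ → 𝒮 → ℝ) (r : 𝒮 → 𝒜 → ℬ → ℝ)
    (ν : 𝒮 → ℬ → ℝ) : 𝒮 → 𝒜 → ℬ → ℝ := fun s a b =>
  ⨆ μ : {μ : 𝒮 → 𝒜 → ℝ // IsPolicy μ}, Qpol γ P r μ.1 ν s a b

/-- `(μs, νs)` is a Nash equilibrium of the Markov game. -/
def IsNashPair (γ : ℝ) (P : 𝒮 → 𝒜 → ℬ → 𝒮 → ℝ) (r : 𝒮 → 𝒜 → ℬ → ℝ)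
    (μs : 𝒮 → 𝒜 → ℝ) (νs : 𝒮 → ℬ → ℝ) : Prop :=
  IsPolicy μs ∧ IsPolicy νs ∧
    (∀ μ, IsPolicy μ → ∀ s, Vpol γ P r μ νs s ≤ Vpol γ P r μs νs s) ∧
    (∀ ν, IsPolicy ν → ∀ s, Vpol γ P r μs νs s ≤ Vpol γ P r μs ν s)

/-- `V(ρ) = Σ_s ρ(s) V(s)`. -/
def wAvg (ρ V : 𝒮 → ℝ) : ℝ := ∑ s, ρ s * V s

/-- Discounted occupancy measure `d^{μ,ν}(s;ρ) = (1−γ) ρᵀ(I−γP^{μ,ν})⁻¹`. -/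
def dOcc (γ : ℝ) (P : 𝒮 → 𝒜 → ℬ → 𝒮 → ℝ) (μ : 𝒮 → 𝒜 → ℝ) (ν : 𝒮 → ℬ → ℝ)
    (ρ : 𝒮 → ℝ) : 𝒮 → ℝ := fun s =>
  (1 - γ) * Matrix.vecMul ρ ((1 : Matrix 𝒮 𝒮 ℝ) - γ • Pmat P μ ν)⁻¹ s

/-- `d^{μ,ν}(s,a,b;ρ) = d^{μ,ν}(s;ρ) μ(a|s) ν(b|s)`. -/
def dOcc3 (γ : ℝ) (P : 𝒮 → 𝒜 → ℬ → 𝒮 → ℝ) (μ : 𝒮 → 𝒜 → ℝ) (ν : 𝒮 → ℬ → ℝ)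
    (ρ : 𝒮 → ℝ) : 𝒮 → 𝒜 → ℬ → ℝ := fun s a b =>
  dOcc γ P μ ν ρ s * μ s a * ν s b

/-- Clipped unilateral concentrability coefficient `C⋆_clipped` (in `ℝ≥0∞`;
note that in `ℝ≥0∞` one has `x/0 = ∞` for `x ≠ 0` and `0/0 = 0`, matching the
convention of the paper). -/
def clipCoeff (γ : ℝ) (P : 𝒮 → 𝒜 → ℬ → 𝒮 → ℝ) (ρ : 𝒮 → ℝ) (d : 𝒮 → 𝒜 → ℬ → ℝ)
    (μs : 𝒮 → 𝒜 → ℝ) (νs : 𝒮 → ℬ → ℝ) : ℝ≥0∞ :=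
  max
    (⨆ (μ : {μ : 𝒮 → 𝒜 → ℝ // IsPolicy μ}) (s : 𝒮) (a : 𝒜) (b : ℬ),
      ENNReal.ofReal
          (min (dOcc3 γ P μ.1 νs ρ s a b)
            ((Fintype.card 𝒮 * (Fintype.card 𝒜 + Fintype.card ℬ) : ℝ))⁻¹) /
        ENNReal.ofReal (d s a b))
    (⨆ (ν : {ν : 𝒮 → ℬ → ℝ // IsPolicy ν}) (s : 𝒮) (a : 𝒜) (b : ℬ),
      ENNReal.ofReal
          (min (dOcc3 γ P μs ν.1 ρ s a b)
            ((Fintype.card 𝒮 * (Fintype.card 𝒜 + Fintype.card ℬ) : ℝ))⁻¹) /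
        ENNReal.ofReal (d s a b))

/-- Probability weight of an individual dataset under `(d_b, P)`. -/
def dsWeight {N : ℕ} (d : 𝒮 → 𝒜 → ℬ → ℝ) (P : 𝒮 → 𝒜 → ℬ → 𝒮 → ℝ)
    (D : Fin N → 𝒮 × 𝒜 × ℬ × 𝒮) : ℝ :=
  ∏ i, d (D i).1 (D i).2.1 (D i).2.2.1 * P (D i).1 (D i).2.1 (D i).2.2.1 (D i).2.2.2

/-- Probability of an event over the offline dataset. -/
def dsProb {N : ℕ} (d : 𝒮 → 𝒜 → ℬ → ℝ) (P : 𝒮 → 𝒜 → ℬ → 𝒮 → ℝ)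
    (E : Set (Fin N → 𝒮 × 𝒜 × ℬ × 𝒮)) : ℝ :=
  ∑ D : Fin N → 𝒮 × 𝒜 × ℬ × 𝒮, E.indicator (dsWeight d P) D

/-- Expectation of a function of the offline dataset. -/
def dsExp {N : ℕ} (d : 𝒮 → 𝒜 → ℬ → ℝ) (P : 𝒮 → 𝒜 → ℬ → 𝒮 → ℝ)
    (g : (Fin N → 𝒮 × 𝒜 × ℬ × 𝒮) → ℝ) : ℝ :=
  ∑ D : Fin N → 𝒮 × 𝒜 × ℬ × 𝒮, dsWeight d P D * g D

/-- Dirac (deterministic) policy for the min-player. -/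
def diracB (f : 𝒮 → ℬ) : 𝒮 → ℬ → ℝ := fun s b => if b = f s then 1 else 0

/-- Binomial pmf. -/
def binomPMF (n : ℕ) (p : ℝ) (k : ℕ) : ℝ :=
  (n.choose k : ℝ) * p ^ k * (1 - p) ^ (n - k)

/-- Probability of a set of outcomes under a `Binomial(n,p)` distribution. -/
def binomProb (n : ℕ) (p : ℝ) (E : Set ℕ) : ℝ :=
  ∑ k ∈ Finset.range (n + 1), E.indicator (binomPMF n p) k

/-- Weight of an i.i.d. sample from a distribution on a finite set. -/
def iidWeight {𝒳 : Type} {N : ℕ} (d : 𝒳 → ℝ) (ω : Fin N → 𝒳) : ℝ := ∏ i, d (ω i)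

/-- Probability of an event for `N` i.i.d. draws from `d`. -/
def iidProb {𝒳 : Type} [Fintype 𝒳] {N : ℕ} (d : 𝒳 → ℝ) (E : Set (Fin N → 𝒳)) : ℝ :=
  ∑ ω : Fin N → 𝒳, E.indicator (iidWeight d) ω

/-- Number of occurrences of `x` in the sample `ω`. -/
def iidCount {𝒳 : Type} [DecidableEq 𝒳] {N : ℕ} (ω : Fin N → 𝒳) (x : 𝒳) : ℕ :=
  (Finset.univ.filter fun i => ω i = x).card

/-- Transition kernel of the hard instance `ℳ𝒢_θ`. -/
def hardP {S A B : ℕ} (θ : Fin A → ℝ) : Fin S → Fin A → Fin B → Fin S → ℝ :=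
  fun s a b s' =>
    if s.val = 0 ∧ b.val = 0 then
      θ a * (if s'.val = 0 then 1 else 0) + (1 - θ a) * (if s'.val = 1 then 1 else 0)
    else if s' = s then 1 else 0

/-- Reward of the hard instance: `r(s,a,b) = 1{s = 0}`. -/
def hardR {S A B : ℕ} : Fin S → Fin A → Fin B → ℝ := fun s _ _ => if s.val = 0 then 1 else 0

end ZSMG

namespace ZSMG

section Moments

variable {𝒮 : Type} [Fintype 𝒮]

/-! ### Expectation and variance under a probability vector -/

lemma Pexp_mono {p f g : 𝒮 → ℝ} (hp : p ∈ stdSimplex ℝ 𝒮) (h : ∀ t, f t ≤ g t) :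
    Pexp p f ≤ Pexp p g :=
  Finset.sum_le_sum fun t _ => mul_le_mul_of_nonneg_left (h t) (hp.1 t)

lemma Pexp_const {p : 𝒮 → ℝ} (hp : p ∈ stdSimplex ℝ 𝒮) (c : ℝ) : Pexp p (fun _ => c) = c := by
  simp [Pexp, ← Finset.sum_mul, hp.2]

lemma Pexp_add (p f g : 𝒮 → ℝ) : Pexp p (fun t => f t + g t) = Pexp p f + Pexp p g := by
  simp [Pexp, mul_add, Finset.sum_add_distrib]

lemma Pexp_sub (p f g : 𝒮 → ℝ) : Pexp p (fun t => f t - g t) = Pexp p f - Pexp p g := by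
  simp [Pexp, mul_sub, Finset.sum_sub_distrib]

lemma Pexp_const_mul (p f : 𝒮 → ℝ) (c : ℝ) : Pexp p (fun t => c * f t) = c * Pexp p f := by
  simp only [Pexp, Finset.mul_sum]
  exact Finset.sum_congr rfl fun t _ => by ring

lemma Pexp_neg (p f : 𝒮 → ℝ) : Pexp p (fun t => -f t) = -Pexp p f := by
  simp [Pexp, Finset.sum_neg_distrib]

lemma Pexp_nonneg {p f : 𝒮 → ℝ} (hp : p ∈ stdSimplex ℝ 𝒮) (h : ∀ t, 0 ≤ f t) :
    0 ≤ Pexp p f :=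
  Finset.sum_nonneg fun t _ => mul_nonneg (hp.1 t) (h t)

lemma Pexp_mem_Icc {p f : 𝒮 → ℝ} (hp : p ∈ stdSimplex ℝ 𝒮) {l u : ℝ}
    (h : ∀ t, f t ∈ Set.Icc l u) : Pexp p f ∈ Set.Icc l u :=
  ⟨by simpa [Pexp_const hp] using Pexp_mono (f := fun _ => l) hp fun t => (h t).1,
    by simpa [Pexp_const hp] using Pexp_mono (g := fun _ => u) hp fun t => (h t).2⟩

lemma abs_Pexp_sub_le {p f g : 𝒮 → ℝ} (hp : p ∈ stdSimplex ℝ 𝒮) {ε : ℝ}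
    (h : ∀ t, |f t - g t| ≤ ε) : |Pexp p f - Pexp p g| ≤ ε := by
  rw [← Pexp_sub]
  exact abs_le.2 (Pexp_mem_Icc hp fun t => abs_le.1 (h t))

/-- The mean squared deviation from an arbitrary centre. -/
lemma Pexp_sq_sub {p : 𝒮 → ℝ} (hp : p ∈ stdSimplex ℝ 𝒮) (f : 𝒮 → ℝ) (c : ℝ) :
    Pexp p (fun t => (f t - c) ^ 2) = varP p f + (Pexp p f - c) ^ 2 := by
  have : Pexp p (fun t => (f t - c) ^ 2)
      = Pexp p (fun t => (f t * f t - (2 * c) * f t) + c ^ 2) := by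
    congr 1; ext t; ring
  rw [this, Pexp_add, Pexp_sub, Pexp_const_mul, Pexp_const hp, varP]
  ring

lemma varP_eq {p : 𝒮 → ℝ} (hp : p ∈ stdSimplex ℝ 𝒮) (f : 𝒮 → ℝ) :
    varP p f = Pexp p (fun t => (f t - Pexp p f) ^ 2) := by
  simp [Pexp_sq_sub hp]

lemma varP_nonneg {p : 𝒮 → ℝ} (hp : p ∈ stdSimplex ℝ 𝒮) (f : 𝒮 → ℝ) : 0 ≤ varP p f := by
  rw [varP_eq hp]
  exact Pexp_nonneg hp fun t => sq_nonneg _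

lemma varP_neg (p f : 𝒮 → ℝ) : varP p (fun t => -f t) = varP p f := by
  simp [varP, Pexp_neg]

lemma varP_le_of_abs_sub_le {p f g : 𝒮 → ℝ} (hp : p ∈ stdSimplex ℝ 𝒮) {ε : ℝ}
    (h : ∀ t, |f t - g t| ≤ ε) : varP p f ≤ 5 / 4 * varP p g + 5 * ε ^ 2 := by
  have h1 : varP p f ≤ Pexp p (fun t => (f t - Pexp p g) ^ 2) := by
    rw [Pexp_sq_sub hp]; nlinarith [sq_nonneg (Pexp p f - Pexp p g)]
  refine h1.trans ?_
  have h2 : Pexp p (fun t => (f t - Pexp p g) ^ 2)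
      ≤ Pexp p (fun t => 5 / 4 * (g t - Pexp p g) ^ 2 + 5 * ε ^ 2) :=
    Pexp_mono hp fun t => by
      have := sq_le_sq' (by linarith [neg_abs_le (f t - g t), h t])
        ((le_abs_self _).trans (h t))
      nlinarith [sq_nonneg ((g t - Pexp p g) / 2 - 2 * (f t - g t))]
  rwa [Pexp_add, Pexp_const_mul, Pexp_const hp, ← varP_eq hp] at h2

/-- The standard deviation is a convex functional of the random variable, with the normalised
centred variable as a subgradient. -/
lemma varP_sub_le {p : 𝒮 → ℝ} (hp : p ∈ stdSimplex ℝ 𝒮) {U V : 𝒮 → ℝ} {H : ℝ}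
    (hU : ∀ t, |U t - Pexp p U| ≤ H) :
    √(varP p U) * (√(varP p U) - √(varP p V)) ≤ H * Pexp p (fun t => |U t - V t|) := by
  have hcs : (Pexp p (fun t => (U t - Pexp p U) * (V t - Pexp p V))) ≤
      √(varP p U) * √(varP p V) := by
    rw [← Real.sqrt_mul (varP_nonneg hp U), varP_eq hp, varP_eq hp]
    refine Real.le_sqrt_of_sq_le ?_
    refine Finset.sum_sq_le_sum_mul_sum_of_sq_le_mul _ ?_ ?_ ?_
    · exact fun t _ => mul_nonneg (hp.1 t) (sq_nonneg _)
    · exact fun t _ => mul_nonneg (hp.1 t) (sq_nonneg _)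
    · intro t _; apply le_of_eq; ring
  have hcov : Pexp p (fun t => (U t - Pexp p U) ^ 2) -
      Pexp p (fun t => (U t - Pexp p U) * (V t - Pexp p V)) =
      Pexp p (fun t => (U t - Pexp p U) * (U t - V t)) := by
    have h0 : Pexp p (fun t => (Pexp p V - Pexp p U) * (U t - Pexp p U)) = 0 := by
      rw [Pexp_const_mul, Pexp_sub, Pexp_const hp]; ring
    rw [← Pexp_sub, ← add_zero (Pexp p (fun t => (U t - Pexp p U) * (U t - V t))), ← h0,
      ← Pexp_add]
    congr 1; ext t; ring
  have hle : Pexp p (fun t => (U t - Pexp p U) * (U t - V t)) ≤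
      H * Pexp p (fun t => |U t - V t|) := by
    rw [← Pexp_const_mul]
    refine Pexp_mono hp fun t => ?_
    calc _ ≤ |(U t - Pexp p U) * (U t - V t)| := le_abs_self _
      _ = |U t - Pexp p U| * |U t - V t| := abs_mul _ _
      _ ≤ _ := mul_le_mul_of_nonneg_right (hU t) (abs_nonneg _)
  rw [← varP_eq hp] at hcov
  nlinarith [Real.mul_self_sqrt (varP_nonneg hp U)]

/-- The truncated penalty is `1/2`-Lipschitz in `L¹(p)`. -/
lemma penalty_sub_le {p : 𝒮 → ℝ} (hp : p ∈ stdSimplex ℝ 𝒮) {U V : 𝒮 → ℝ} {γ δ Cb : ℝ}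
    {N n : ℕ} (hγ : γ < 1) (hCb : 0 ≤ Cb) (hlog : 0 ≤ Real.log ((N : ℝ) / ((1 - γ) * δ)))
    (hU : ∀ t, |U t - Pexp p U| ≤ 1 / (1 - γ)) :
    penalty γ δ Cb N n p U - penalty γ δ Cb N n p V ≤
      1 / 2 * Pexp p (fun t => |U t - V t|) := by
  have hE : 0 ≤ Pexp p (fun t => |U t - V t|) := Pexp_nonneg hp fun t => abs_nonneg _
  unfold penalty
  by_cases hn : n = 0
  · simp [hn]; linarith
  have hn' : (0 : ℝ) < n := by exact_mod_cast Nat.pos_of_ne_zero hn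
  have hH : 0 < 1 / (1 - γ) := by apply one_div_pos.2; linarith
  simp only [hn, if_false]
  set c := √(Cb * Real.log ((N : ℝ) / ((1 - γ) * δ)) / n) with hc
  have hc0 : 0 ≤ c := Real.sqrt_nonneg _
  have hcc : c * c = Cb * Real.log ((N : ℝ) / ((1 - γ) * δ)) / n :=
    Real.mul_self_sqrt (by positivity)
  have hs : ∀ W : 𝒮 → ℝ, √(Cb * Real.log ((N : ℝ) / ((1 - γ) * δ)) * varP p W / n) =
      c * √(varP p W) := by
    intro W
    rw [hc, ← Real.sqrt_mul (by positivity)]; congr 1; ring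
  have hb : 2 * Cb * Real.log ((N : ℝ) / ((1 - γ) * δ)) / ((1 - γ) * n) =
      2 * (1 / (1 - γ)) * (c * c) := by
    rw [hcc]; have : 1 - γ ≠ 0 := by linarith
    field_simp
  rw [hs, hs, hb]
  set H := 1 / (1 - γ)
  have hsub := varP_sub_le hp (V := V) hU
  set x := √(varP p U)
  set y := √(varP p V)
  set e := Pexp p (fun t => |U t - V t|)
  have key : c * x ≤ max (c * y) (2 * H * (c * c)) + 1 / 2 * e := by
    by_cases h : c * x ≤ 2 * H * (c * c)
    · linarith [le_max_right (c * y) (2 * H * (c * c))]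
    · have hcpos : 0 < c := lt_of_le_of_ne hc0 fun h0 => h (by simp [← h0])
      have hx : 2 * H * c < x := by
        by_contra! hx; exact h (by nlinarith)
      refine le_trans ?_ (add_le_add_left (le_max_left _ _) _)
      by_contra! hcon
      have h1 : e / 2 < c * (x - y) := by linarith
      have h2 : x * (e / 2) < x * (c * (x - y)) := mul_lt_mul_of_pos_left h1 (by nlinarith)
      nlinarith
  have hk2 : max (c * x) (2 * H * (c * c)) ≤ max (c * y) (2 * H * (c * c)) + 1 / 2 * e :=
    max_le key (by linarith [le_max_right (c * y) (2 * H * (c * c))])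
  have := min_le_min_right H hk2
  have h3 : min (max (c * y) (2 * H * (c * c)) + 1 / 2 * e) H ≤
      min (max (c * y) (2 * H * (c * c))) H + 1 / 2 * e := by
    rw [← min_add_add_right]
    exact min_le_min le_rfl (by linarith)
  linarith

end Moments

/-! ### Contraction properties of the value map and the pessimistic operators -/

section Contraction

variable {𝒮 𝒜 ℬ : Type} [Fintype 𝒜] [Fintype ℬ]

lemma pay_const {w : 𝒜 → ℝ} {z : ℬ → ℝ} (hw : w ∈ stdSimplex ℝ 𝒜) (hz : z ∈ stdSimplex ℝ ℬ)
    (c : ℝ) : pay (fun _ _ => c) w z = c := by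
  simp [pay, ← Finset.sum_mul, ← Finset.mul_sum, hw.2, hz.2]

lemma pay_mono {M M' : 𝒜 → ℬ → ℝ} {w : 𝒜 → ℝ} {z : ℬ → ℝ} (hw : w ∈ stdSimplex ℝ 𝒜)
    (hz : z ∈ stdSimplex ℝ ℬ) (h : ∀ a b, M a b ≤ M' a b) : pay M w z ≤ pay M' w z :=
  Finset.sum_le_sum fun a _ => Finset.sum_le_sum fun b _ =>
    mul_le_mul_of_nonneg_left (h a b) (mul_nonneg (hw.1 a) (hz.1 b))

lemma pay_add_const {M : 𝒜 → ℬ → ℝ} {w : 𝒜 → ℝ} {z : ℬ → ℝ} (hw : w ∈ stdSimplex ℝ 𝒜)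
    (hz : z ∈ stdSimplex ℝ ℬ) (ε : ℝ) :
    pay (fun a b => M a b + ε) w z = pay M w z + ε := by
  conv_rhs => rw [← pay_const hw hz ε]
  simp [pay, mul_add, Finset.sum_add_distrib]

variable [Nonempty 𝒜] [Nonempty ℬ]

lemma nonempty_stdSimplex (X : Type) [Fintype X] [Nonempty X] : Nonempty (stdSimplex ℝ X) := by
  classical
  exact ⟨⟨_, single_mem_stdSimplex ℝ (Classical.arbitrary X)⟩⟩

lemma valQ_mem_Icc {Q : 𝒮 → 𝒜 → ℬ → ℝ} {l u : ℝ} (h : ∀ s a b, Q s a b ∈ Set.Icc l u)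
    (s : 𝒮) : valQ Q s ∈ Set.Icc l u := by
  have := nonempty_stdSimplex 𝒜
  have := nonempty_stdSimplex ℬ
  have hl : ∀ (w : stdSimplex ℝ 𝒜) (z : stdSimplex ℝ ℬ), l ≤ pay (Q s) w.1 z.1 := fun w z => by
    rw [← pay_const w.2 z.2 l]; exact pay_mono w.2 z.2 fun a b => (h s a b).1
  have hu : ∀ (w : stdSimplex ℝ 𝒜) (z : stdSimplex ℝ ℬ), pay (Q s) w.1 z.1 ≤ u := fun w z => by
    rw [← pay_const w.2 z.2 u]; exact pay_mono w.2 z.2 fun a b => (h s a b).2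
  have hi : ∀ w : stdSimplex ℝ 𝒜, ⨅ z : stdSimplex ℝ ℬ, pay (Q s) w.1 z.1 ≤ u := fun w =>
    (ciInf_le ⟨l, by rintro _ ⟨z, rfl⟩; exact hl w z⟩ (Classical.arbitrary _)).trans (hu w _)
  refine ⟨?_, ciSup_le hi⟩
  exact (le_ciInf fun z => hl (Classical.arbitrary _) z).trans
    (le_ciSup (f := fun w : stdSimplex ℝ 𝒜 => ⨅ z : stdSimplex ℝ ℬ, pay (Q s) w.1 z.1)
      ⟨u, by rintro _ ⟨w, rfl⟩; exact hi w⟩ (Classical.arbitrary _))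

lemma valQ_le_add {Q Q' : 𝒮 → 𝒜 → ℬ → ℝ} {l u ε : ℝ} (h : ∀ s a b, Q s a b ∈ Set.Icc l u)
    (h' : ∀ s a b, Q' s a b ∈ Set.Icc l u) (hε : ∀ s a b, Q s a b ≤ Q' s a b + ε)
    (s : 𝒮) : valQ Q s ≤ valQ Q' s + ε := by
  have := nonempty_stdSimplex 𝒜
  have := nonempty_stdSimplex ℬ
  have hl : ∀ (w : stdSimplex ℝ 𝒜) (z : stdSimplex ℝ ℬ), l ≤ pay (Q s) w.1 z.1 := fun w z => by
    rw [← pay_const w.2 z.2 l]; exact pay_mono w.2 z.2 fun a b => (h s a b).1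
  have hl' : ∀ (w : stdSimplex ℝ 𝒜) (z : stdSimplex ℝ ℬ), l ≤ pay (Q' s) w.1 z.1 := fun w z => by
    rw [← pay_const w.2 z.2 l]; exact pay_mono w.2 z.2 fun a b => (h' s a b).1
  have hu' : ∀ (w : stdSimplex ℝ 𝒜) (z : stdSimplex ℝ ℬ), pay (Q' s) w.1 z.1 ≤ u := fun w z => by
    rw [← pay_const w.2 z.2 u]; exact pay_mono w.2 z.2 fun a b => (h' s a b).2
  have hi' : ∀ w : stdSimplex ℝ 𝒜, ⨅ z : stdSimplex ℝ ℬ, pay (Q' s) w.1 z.1 ≤ u := fun w =>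
    (ciInf_le ⟨l, by rintro _ ⟨z, rfl⟩; exact hl' w z⟩ (Classical.arbitrary _)).trans (hu' w _)
  refine ciSup_le fun w => ?_
  have h1 : (⨅ z : stdSimplex ℝ ℬ, pay (Q s) w.1 z.1) - ε ≤
      ⨅ z : stdSimplex ℝ ℬ, pay (Q' s) w.1 z.1 := by
    refine le_ciInf fun z => ?_
    have h2 : (⨅ z : stdSimplex ℝ ℬ, pay (Q s) w.1 z.1) ≤ pay (Q s) w.1 z.1 :=
      ciInf_le ⟨l, by rintro _ ⟨z, rfl⟩; exact hl w z⟩ z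
    have h3 := pay_mono w.2 z.2 (hε s)
    rw [pay_add_const w.2 z.2] at h3
    linarith
  have h4 := le_ciSup (f := fun w : stdSimplex ℝ 𝒜 => ⨅ z : stdSimplex ℝ ℬ, pay (Q' s) w.1 z.1)
      ⟨u, by rintro _ ⟨w, rfl⟩; exact hi' w⟩ w
  unfold valQ
  linarith

lemma abs_valQ_sub_le {Q Q' : 𝒮 → 𝒜 → ℬ → ℝ} {l u ε : ℝ}
    (h : ∀ s a b, Q s a b ∈ Set.Icc l u) (h' : ∀ s a b, Q' s a b ∈ Set.Icc l u)
    (hε : ∀ s a b, |Q s a b - Q' s a b| ≤ ε) (s : 𝒮) : |valQ Q s - valQ Q' s| ≤ ε := by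
  have h1 := valQ_le_add h h' (fun s a b => by linarith [(abs_le.1 (hε s a b)).2]) s
  have h2 := valQ_le_add h' h (fun s a b => by linarith [(abs_le.1 (hε s a b)).1]) s
  exact abs_le.2 ⟨by linarith, by linarith⟩

variable [Fintype 𝒮]

lemma penalty_add_const {p : 𝒮 → ℝ} (hp : p ∈ stdSimplex ℝ 𝒮) (V : 𝒮 → ℝ) (ε γ δ Cb : ℝ)
    (N n : ℕ) : penalty γ δ Cb N n p (fun t => V t + ε) = penalty γ δ Cb N n p V := by
  have : varP p (fun t => V t + ε) = varP p V := by
    rw [varP_eq hp, varP_eq hp, Pexp_add, Pexp_const hp]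
    congr 1; ext t; ring
  simp only [penalty, this]

/-- Both signs of the penalised backup are monotone up to shifts. -/
lemma backup_le_add {p : 𝒮 → ℝ} (hp : p ∈ stdSimplex ℝ 𝒮) {U V : 𝒮 → ℝ} {γ δ Cb ε : ℝ}
    {N n : ℕ} (hγ2 : 1 / 2 ≤ γ) (hγ : γ < 1) (hCb : 0 ≤ Cb)
    (hlog : 0 ≤ Real.log ((N : ℝ) / ((1 - γ) * δ)))
    (hU : ∀ t, U t ∈ Set.Icc 0 (1 / (1 - γ))) (hV : ∀ t, V t ∈ Set.Icc 0 (1 / (1 - γ)))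
    (h : ∀ t, V t ≤ U t + ε) :
    γ * Pexp p V - penalty γ δ Cb N n p V ≤ γ * Pexp p U - penalty γ δ Cb N n p U + γ * ε ∧
    γ * Pexp p V + penalty γ δ Cb N n p V ≤ γ * Pexp p U + penalty γ δ Cb N n p U + γ * ε := by
  have hc : ∀ W : 𝒮 → ℝ, (∀ t, W t ∈ Set.Icc 0 (1 / (1 - γ))) →
      ∀ t, |W t - Pexp p W| ≤ 1 / (1 - γ) := fun W hW t => by
    have h1 := Pexp_mem_Icc hp hW
    exact abs_le.2 ⟨by linarith [(hW t).1, h1.2], by linarith [(hW t).2, h1.1]⟩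
  have hcU : ∀ t, |(U t + ε) - Pexp p (fun t => U t + ε)| ≤ 1 / (1 - γ) := fun t => by
    rw [Pexp_add, Pexp_const hp]
    simpa using hc U hU t
  have habs : Pexp p (fun t => |(U t + ε) - V t|) = Pexp p U + ε - Pexp p V := by
    rw [← Pexp_const hp ε, ← Pexp_add, Pexp_const hp ε, ← Pexp_sub]
    congr 1; ext t
    exact abs_of_nonneg (by linarith [h t])
  have habs' : Pexp p (fun t => |V t - (U t + ε)|) = Pexp p U + ε - Pexp p V := by
    rw [← habs]; congr 1; ext t; exact abs_sub_comm _ _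
  have h0 : 0 ≤ Pexp p U + ε - Pexp p V := by
    rw [← habs]; exact Pexp_nonneg hp fun t => abs_nonneg _
  have h1 := penalty_sub_le hp (V := V) (n := n) hγ hCb hlog hcU
  have h2 := penalty_sub_le hp (V := fun t => U t + ε) (n := n) hγ hCb hlog (hc V hV)
  rw [penalty_add_const hp] at h1 h2
  rw [habs] at h1
  rw [habs'] at h2
  constructor <;> nlinarith

lemma abs_TpeMinus_sub_le {γ δ Cb ε : ℝ} {N : ℕ} {n : 𝒮 → 𝒜 → ℬ → ℕ}
    {Ph : 𝒮 → 𝒜 → ℬ → 𝒮 → ℝ} (hPh : IsKernel Ph) {rh : 𝒮 → 𝒜 → ℬ → ℝ}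
    (hγ2 : 1 / 2 ≤ γ) (hγ : γ < 1) (hCb : 0 ≤ Cb)
    (hlog : 0 ≤ Real.log ((N : ℝ) / ((1 - γ) * δ))) {Q Q' : 𝒮 → 𝒜 → ℬ → ℝ}
    (h : ∀ s a b, Q s a b ∈ Set.Icc 0 (1 / (1 - γ)))
    (h' : ∀ s a b, Q' s a b ∈ Set.Icc 0 (1 / (1 - γ)))
    (hε : ∀ s a b, |Q s a b - Q' s a b| ≤ ε) (s : 𝒮) (a : 𝒜) (b : ℬ) :
    |TpeMinus γ δ Cb N n Ph rh Q s a b - TpeMinus γ δ Cb N n Ph rh Q' s a b| ≤ γ * ε := by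
  have hV := fun t => abs_le.1 (abs_valQ_sub_le h h' hε t)
  have h1 := (backup_le_add (n := n s a b) (hPh s a b) hγ2 hγ hCb hlog (valQ_mem_Icc h')
    (valQ_mem_Icc h) (ε := ε) fun t => by linarith [(hV t).2]).1
  have h2 := (backup_le_add (n := n s a b) (hPh s a b) hγ2 hγ hCb hlog (valQ_mem_Icc h)
    (valQ_mem_Icc h') (ε := ε) fun t => by linarith [(hV t).1]).1
  unfold TpeMinus
  refine (abs_max_sub_max_le_abs _ _ _).trans (abs_le.2 ⟨?_, ?_⟩) <;> linarith

lemma abs_TpePlus_sub_le {γ δ Cb ε : ℝ} {N : ℕ} {n : 𝒮 → 𝒜 → ℬ → ℕ}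
    {Ph : 𝒮 → 𝒜 → ℬ → 𝒮 → ℝ} (hPh : IsKernel Ph) {rh : 𝒮 → 𝒜 → ℬ → ℝ}
    (hγ2 : 1 / 2 ≤ γ) (hγ : γ < 1) (hCb : 0 ≤ Cb)
    (hlog : 0 ≤ Real.log ((N : ℝ) / ((1 - γ) * δ))) {Q Q' : 𝒮 → 𝒜 → ℬ → ℝ}
    (h : ∀ s a b, Q s a b ∈ Set.Icc 0 (1 / (1 - γ)))
    (h' : ∀ s a b, Q' s a b ∈ Set.Icc 0 (1 / (1 - γ)))
    (hε : ∀ s a b, |Q s a b - Q' s a b| ≤ ε) (s : 𝒮) (a : 𝒜) (b : ℬ) :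
    |TpePlus γ δ Cb N n Ph rh Q s a b - TpePlus γ δ Cb N n Ph rh Q' s a b| ≤ γ * ε := by
  have hV := fun t => abs_le.1 (abs_valQ_sub_le h h' hε t)
  have h1 := (backup_le_add (n := n s a b) (hPh s a b) hγ2 hγ hCb hlog (valQ_mem_Icc h')
    (valQ_mem_Icc h) (ε := ε) fun t => by linarith [(hV t).2]).2
  have h2 := (backup_le_add (n := n s a b) (hPh s a b) hγ2 hγ hCb hlog (valQ_mem_Icc h)
    (valQ_mem_Icc h') (ε := ε) fun t => by linarith [(hV t).1]).2
  unfold TpePlus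
  refine (abs_min_sub_min_le_max _ _ _ _).trans ?_
  rw [sub_self, abs_zero, max_eq_left (abs_nonneg _)]
  refine abs_le.2 ⟨?_, ?_⟩ <;> linarith

end Contraction

/-! ### Erasing the next states observed at a fixed triple -/

section Erase

variable {𝒮 𝒜 ℬ : Type} [DecidableEq 𝒮] [DecidableEq 𝒜] [DecidableEq ℬ] {N : ℕ}

/-- Overwrite the next state of a transition that starts at `(s,a,b)`. -/
def eraseNext (s : 𝒮) (a : 𝒜) (b : ℬ) (x : 𝒮 × 𝒜 × ℬ × 𝒮) : 𝒮 × 𝒜 × ℬ × 𝒮 :=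
  if x.1 = s ∧ x.2.1 = a ∧ x.2.2.1 = b then (s, a, b, s) else x

lemma cnt_eraseNext (D : Fin N → 𝒮 × 𝒜 × ℬ × 𝒮) (s : 𝒮) (a : 𝒜) (b : ℬ) :
    cnt (eraseNext s a b ∘ D) = cnt D := by
  funext s' a' b'
  unfold cnt
  congr 1
  refine Finset.filter_congr fun i _ => ?_
  simp only [Function.comp, eraseNext]
  split_ifs with h
  · simp [h]
  · rfl

lemma cntT_eraseNext (D : Fin N → 𝒮 × 𝒜 × ℬ × 𝒮) (s : 𝒮) (a : 𝒜) (b : ℬ) {s' : 𝒮} {a' : 𝒜}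
    {b' : ℬ} (h : ¬(s' = s ∧ a' = a ∧ b' = b)) (t : 𝒮) :
    cntT (eraseNext s a b ∘ D) s' a' b' t = cntT D s' a' b' t := by
  unfold cntT
  congr 1
  refine Finset.filter_congr fun i _ => ?_
  simp only [Function.comp, eraseNext]
  split_ifs with h'
  · simp only [Prod.ext_iff]
    grind
  · rfl

lemma cnt_eq_sum (D : Fin N → 𝒮 × 𝒜 × ℬ × 𝒮) (s : 𝒮) (a : 𝒜) (b : ℬ) :
    (cnt D s a b : ℝ) =
      ∑ i, if (D i).1 = s ∧ (D i).2.1 = a ∧ (D i).2.2.1 = b then (1 : ℝ) else 0 := by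
  simp [cnt]

lemma cnt_le (D : Fin N → 𝒮 × 𝒜 × ℬ × 𝒮) (s : 𝒮) (a : 𝒜) (b : ℬ) : cnt D s a b ≤ N := by
  unfold cnt
  exact (Finset.card_filter_le _ _).trans (by simp)

variable [Fintype 𝒮]

lemma Phat_eraseNext (D : Fin N → 𝒮 × 𝒜 × ℬ × 𝒮) (s : 𝒮) (a : 𝒜) (b : ℬ) {s' : 𝒮} {a' : 𝒜}
    {b' : ℬ} (h : ¬(s' = s ∧ a' = a ∧ b' = b)) :
    Phat (eraseNext s a b ∘ D) s' a' b' = Phat D s' a' b' := by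
  funext t
  simp only [Phat, cnt_eraseNext, cntT_eraseNext D s a b h]

lemma sum_cntT_mul (D : Fin N → 𝒮 × 𝒜 × ℬ × 𝒮) (s : 𝒮) (a : 𝒜) (b : ℬ) (g : 𝒮 → ℝ) :
    ∑ t, (cntT D s a b t : ℝ) * g t =
      ∑ i, if (D i).1 = s ∧ (D i).2.1 = a ∧ (D i).2.2.1 = b then g (D i).2.2.2 else 0 := by
  simp only [cntT, Finset.card_filter, Nat.cast_sum, Finset.sum_mul]
  rw [Finset.sum_comm]
  refine Finset.sum_congr rfl fun i _ => ?_
  obtain ⟨s', a', b', t'⟩ := D i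
  by_cases h : s' = s ∧ a' = a ∧ b' = b
  · obtain ⟨rfl, rfl, rfl⟩ := h
    simp
  · have : ∀ t, ¬(s' = s ∧ a' = a ∧ b' = b ∧ t' = t) := by grind
    simp [h, this]

lemma cnt_mul_Pexp_Phat {D : Fin N → 𝒮 × 𝒜 × ℬ × 𝒮} {s : 𝒮} {a : 𝒜} {b : ℬ}
    (h : 1 ≤ cnt D s a b) (g : 𝒮 → ℝ) :
    (cnt D s a b : ℝ) * Pexp (Phat D s a b) g =
      ∑ i, if (D i).1 = s ∧ (D i).2.1 = a ∧ (D i).2.2.1 = b then g (D i).2.2.2 else 0 := by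
  have h0 : cnt D s a b ≠ 0 := by omega
  have h1 : (cnt D s a b : ℝ) ≠ 0 := by exact_mod_cast h0
  rw [← sum_cntT_mul, Pexp, Finset.mul_sum]
  refine Finset.sum_congr rfl fun t _ => ?_
  simp only [Phat, h0, if_false]
  field_simp

lemma Phat_isKernel [Nonempty 𝒮] (D : Fin N → 𝒮 × 𝒜 × ℬ × 𝒮) : IsKernel (Phat D) := by
  intro s a b
  by_cases h : cnt D s a b = 0
  · have hS : (Fintype.card 𝒮 : ℝ) ≠ 0 := by exact_mod_cast Fintype.card_ne_zero
    exact ⟨fun t => by simp [Phat, h], by simp [Phat, h, hS]⟩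
  · refine ⟨fun t => by simp only [Phat, h, if_false]; positivity, ?_⟩
    have h1 := cnt_mul_Pexp_Phat (Nat.one_le_iff_ne_zero.2 h) (fun _ => 1)
    rw [← cnt_eq_sum] at h1
    have h2 : (cnt D s a b : ℝ) ≠ 0 := by exact_mod_cast h
    simpa [Pexp] using mul_left_cancel₀ h2 (h1.trans (mul_one _).symm)

variable [Fintype 𝒜] [Fintype ℬ]

lemma TpeMinus_eraseNext (D : Fin N → 𝒮 × 𝒜 × ℬ × 𝒮) (r : 𝒮 → 𝒜 → ℬ → ℝ) (γ δ Cb : ℝ)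
    (Q : 𝒮 → 𝒜 → ℬ → ℝ) (s : 𝒮) (a : 𝒜) (b : ℬ) {s' : 𝒮} {a' : 𝒜} {b' : ℬ}
    (h : ¬(s' = s ∧ a' = a ∧ b' = b)) :
    TpeMinus γ δ Cb N (cnt (eraseNext s a b ∘ D)) (Phat (eraseNext s a b ∘ D))
      (rhat r (eraseNext s a b ∘ D)) Q s' a' b' =
    TpeMinus γ δ Cb N (cnt D) (Phat D) (rhat r D) Q s' a' b' := by
  simp only [TpeMinus, rhat, cnt_eraseNext, Phat_eraseNext D s a b h]

lemma TpePlus_eraseNext (D : Fin N → 𝒮 × 𝒜 × ℬ × 𝒮) (r : 𝒮 → 𝒜 → ℬ → ℝ) (γ δ Cb : ℝ)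
    (Q : 𝒮 → 𝒜 → ℬ → ℝ) (s : 𝒮) (a : 𝒜) (b : ℬ) {s' : 𝒮} {a' : 𝒜} {b' : ℬ}
    (h : ¬(s' = s ∧ a' = a ∧ b' = b)) :
    TpePlus γ δ Cb N (cnt (eraseNext s a b ∘ D)) (Phat (eraseNext s a b ∘ D))
      (rhat r (eraseNext s a b ∘ D)) Q s' a' b' =
    TpePlus γ δ Cb N (cnt D) (Phat D) (rhat r D) Q s' a' b' := by
  simp only [TpePlus, rhat, cnt_eraseNext, Phat_eraseNext D s a b h]

end Erase

/-! ### A finite cover of the fixed points that ignores the erased data -/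

section Cover

variable {𝒮 𝒜 ℬ : Type} [Fintype 𝒮] [Fintype 𝒜] [Fintype ℬ]
  [DecidableEq 𝒮] [DecidableEq 𝒜] [DecidableEq ℬ]

/-- Two fixed points of a contraction off the triple `(s,a,b)` are as close as their values at
that triple. -/
lemma abs_sub_le_of_fixed_off {T : (𝒮 → 𝒜 → ℬ → ℝ) → 𝒮 → 𝒜 → ℬ → ℝ} {γ : ℝ} (hγ : γ < 1)
    {Q Q' : 𝒮 → 𝒜 → ℬ → ℝ}
    (hT : ∀ ε, (∀ s a b, |Q s a b - Q' s a b| ≤ ε) →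
      ∀ s a b, |T Q s a b - T Q' s a b| ≤ γ * ε)
    {s : 𝒮} {a : 𝒜} {b : ℬ}
    (hQ : ∀ s' a' b', ¬(s' = s ∧ a' = a ∧ b' = b) → T Q s' a' b' = Q s' a' b')
    (hQ' : ∀ s' a' b', ¬(s' = s ∧ a' = a ∧ b' = b) → T Q' s' a' b' = Q' s' a' b')
    (s' : 𝒮) (a' : 𝒜) (b' : ℬ) : |Q s' a' b' - Q' s' a' b'| ≤ |Q s a b - Q' s a b| := by
  obtain ⟨⟨s₀, a₀, b₀⟩, -, hmax⟩ := Finset.exists_max_image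
    (Finset.univ : Finset (𝒮 × 𝒜 × ℬ)) (fun x => |Q x.1 x.2.1 x.2.2 - Q' x.1 x.2.1 x.2.2|)
    ⟨(s, a, b), Finset.mem_univ _⟩
  have hle : ∀ s' a' b', |Q s' a' b' - Q' s' a' b'| ≤ |Q s₀ a₀ b₀ - Q' s₀ a₀ b₀| :=
    fun s' a' b' => hmax (s', a', b') (Finset.mem_univ _)
  by_cases h : s₀ = s ∧ a₀ = a ∧ b₀ = b
  · obtain ⟨rfl, rfl, rfl⟩ := h
    exact hle s' a' b'
  · have h1 := hT _ hle s₀ a₀ b₀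
    rw [hQ _ _ _ h, hQ' _ _ _ h] at h1
    have h2 := abs_nonneg (Q s₀ a₀ b₀ - Q' s₀ a₀ b₀)
    have h3 := hle s' a' b'
    have h4 := abs_nonneg (Q s a b - Q' s a b)
    nlinarith

lemma exists_cover [Nonempty 𝒜] [Nonempty ℬ] {N : ℕ} (hN : 0 < N) {γ : ℝ} (hγ : γ < 1)
    (s : 𝒮) (a : 𝒜) (b : ℬ)
    (T : (Fin N → 𝒮 × 𝒜 × ℬ × 𝒮) → (𝒮 → 𝒜 → ℬ → ℝ) → 𝒮 → 𝒜 → ℬ → ℝ)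
    (hErase : ∀ D Q s' a' b', ¬(s' = s ∧ a' = a ∧ b' = b) →
      T (eraseNext s a b ∘ D) Q s' a' b' = T D Q s' a' b')
    (hT : ∀ D Q Q', (∀ s a b, Q s a b ∈ Set.Icc 0 (1 / (1 - γ))) →
      (∀ s a b, Q' s a b ∈ Set.Icc 0 (1 / (1 - γ))) →
      ∀ ε, (∀ s a b, |Q s a b - Q' s a b| ≤ ε) →
        ∀ s a b, |T D Q s a b - T D Q' s a b| ≤ γ * ε) :
    ∃ F : ℕ → (Fin N → 𝒮 × 𝒜 × ℬ × 𝒮) → 𝒮 → ℝ,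
      (∀ k E t, F k E t ∈ Set.Icc 0 (1 / (1 - γ))) ∧
      ∀ D Q, (∀ s a b, Q s a b ∈ Set.Icc 0 (1 / (1 - γ))) → T D Q = Q →
        ∃ k < ⌊(N : ℝ) * (1 / (1 - γ))⌋₊ + 1,
          ∀ t, |valQ Q t - F k (eraseNext s a b ∘ D) t| ≤ 1 / N := by
  have hH : 0 < 1 / (1 - γ) := by apply one_div_pos.2; linarith
  have hN' : (0 : ℝ) < N := by exact_mod_cast hN
  let A : ℕ → (Fin N → 𝒮 × 𝒜 × ℬ × 𝒮) → (𝒮 → 𝒜 → ℬ → ℝ) → Prop := fun k E Q =>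
    (∀ s a b, Q s a b ∈ Set.Icc 0 (1 / (1 - γ))) ∧
    (∀ s' a' b', ¬(s' = s ∧ a' = a ∧ b' = b) → T E Q s' a' b' = Q s' a' b') ∧
    ⌊(N : ℝ) * Q s a b⌋₊ = k
  refine ⟨fun k E => if h : ∃ Q, A k E Q then valQ h.choose else fun _ => 0, ?_, ?_⟩
  · intro k E t
    dsimp only
    split_ifs with h
    · exact valQ_mem_Icc h.choose_spec.1 t
    · exact ⟨le_rfl, hH.le⟩
  · intro D Q hQ hfix
    refine ⟨⌊(N : ℝ) * Q s a b⌋₊, ?_, ?_⟩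
    · refine Nat.lt_succ_of_le (Nat.floor_le_floor ?_)
      exact mul_le_mul_of_nonneg_left (hQ s a b).2 hN'.le
    · have hA : A ⌊(N : ℝ) * Q s a b⌋₊ (eraseNext s a b ∘ D) Q :=
        ⟨hQ, fun s' a' b' h => by rw [hErase D Q s' a' b' h, hfix], rfl⟩
      have hex : ∃ Q', A ⌊(N : ℝ) * Q s a b⌋₊ (eraseNext s a b ∘ D) Q' := ⟨Q, hA⟩
      simp only [dif_pos hex]
      obtain ⟨h1, h2, h3⟩ := hex.choose_spec
      set Q' := hex.choose
      have hd := abs_sub_le_of_fixed_off hγ (hT _ Q Q' hQ h1) hA.2.1 h2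
      refine abs_valQ_sub_le hQ h1 fun s' a' b' => (hd s' a' b').trans ?_
      have g1 := Nat.floor_le (mul_nonneg hN'.le (hQ s a b).1)
      have g2 := Nat.lt_floor_add_one ((N : ℝ) * Q s a b)
      have g3 := Nat.floor_le (mul_nonneg hN'.le (h1 s a b).1)
      have g4 := Nat.lt_floor_add_one ((N : ℝ) * Q' s a b)
      rw [h3] at g3 g4
      rw [le_div_iff₀ hN']
      have : |Q s a b - Q' s a b| * N = |(N : ℝ) * Q s a b - N * Q' s a b| := by
        rw [← mul_sub, abs_mul, abs_of_pos hN', mul_comm]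
      rw [this]
      exact abs_le.2 ⟨by linarith, by linarith⟩

end Cover

/-! ### Probabilities of dataset events -/

section Prob

variable {𝒮 𝒜 ℬ : Type} {N : ℕ} {d : 𝒮 → 𝒜 → ℬ → ℝ} {P : 𝒮 → 𝒜 → ℬ → 𝒮 → ℝ}

/-- Weight of a single transition. -/
def stepWeight (d : 𝒮 → 𝒜 → ℬ → ℝ) (P : 𝒮 → 𝒜 → ℬ → 𝒮 → ℝ) (x : 𝒮 × 𝒜 × ℬ × 𝒮) : ℝ :=
  d x.1 x.2.1 x.2.2.1 * P x.1 x.2.1 x.2.2.1 x.2.2.2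

lemma dsWeight_eq (D : Fin N → 𝒮 × 𝒜 × ℬ × 𝒮) :
    dsWeight d P D = ∏ i, stepWeight d P (D i) := rfl

variable [Fintype 𝒮]

lemma stepWeight_nonneg (hd : ∀ s a b, 0 ≤ d s a b) (hP : IsKernel P) (x : 𝒮 × 𝒜 × ℬ × 𝒮) :
    0 ≤ stepWeight d P x :=
  mul_nonneg (hd _ _ _) ((hP _ _ _).1 _)

lemma dsWeight_nonneg (hd : ∀ s a b, 0 ≤ d s a b) (hP : IsKernel P)
    (D : Fin N → 𝒮 × 𝒜 × ℬ × 𝒮) : 0 ≤ dsWeight d P D :=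
  Finset.prod_nonneg fun _ _ => stepWeight_nonneg hd hP _

variable [Fintype 𝒜] [Fintype ℬ]

lemma sum_stepWeight (hd : IsDist3 d) (hP : IsKernel P) : ∑ x, stepWeight d P x = 1 := by
  rw [← hd.2]
  simp only [Fintype.sum_prod_type, stepWeight, ← Finset.mul_sum, (hP _ _ _).2, mul_one]

lemma sum_dsWeight (hd : IsDist3 d) (hP : IsKernel P) :
    ∑ D : Fin N → 𝒮 × 𝒜 × ℬ × 𝒮, dsWeight d P D = 1 := by
  simp only [dsWeight_eq]
  rw [← Fintype.piFinset_univ, ← Finset.prod_univ_sum]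
  simp [sum_stepWeight hd hP]

lemma dsProb_mono (hd : ∀ s a b, 0 ≤ d s a b) (hP : IsKernel P)
    {E F : Set (Fin N → 𝒮 × 𝒜 × ℬ × 𝒮)} (h : E ⊆ F) : dsProb d P E ≤ dsProb d P F :=
  Finset.sum_le_sum fun D _ =>
    Set.indicator_le_indicator_of_subset h (dsWeight_nonneg hd hP) D

lemma dsProb_compl (hd : IsDist3 d) (hP : IsKernel P) (E : Set (Fin N → 𝒮 × 𝒜 × ℬ × 𝒮)) :
    dsProb d P Eᶜ = 1 - dsProb d P E := by
  rw [← sum_dsWeight (N := N) hd hP, dsProb, dsProb, ← Finset.sum_sub_distrib]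
  refine Finset.sum_congr rfl fun D _ => ?_
  rw [Set.indicator_compl]; rfl

lemma dsProb_union_le (hd : ∀ s a b, 0 ≤ d s a b) (hP : IsKernel P)
    (E F : Set (Fin N → 𝒮 × 𝒜 × ℬ × 𝒮)) :
    dsProb d P (E ∪ F) ≤ dsProb d P E + dsProb d P F := by
  rw [dsProb, dsProb, dsProb, ← Finset.sum_add_distrib]
  refine Finset.sum_le_sum fun D _ => ?_
  have := dsWeight_nonneg hd hP D
  by_cases h1 : D ∈ E <;> by_cases h2 : D ∈ F <;> simp [h1, h2, this]

lemma dsProb_biUnion_le (hd : ∀ s a b, 0 ≤ d s a b) (hP : IsKernel P) {c : ℝ} (K : ℕ)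
    (E : ℕ → Set (Fin N → 𝒮 × 𝒜 × ℬ × 𝒮)) (h : ∀ k, dsProb d P (E k) ≤ c) :
    dsProb d P {D | ∃ k < K, D ∈ E k} ≤ K * c := by
  induction K with
  | zero => simp [dsProb]
  | succ K ih =>
    have hs : {D | ∃ k < K + 1, D ∈ E k} ⊆ {D | ∃ k < K, D ∈ E k} ∪ E K := by
      rintro D ⟨k, hk, hD⟩
      rcases Nat.lt_succ_iff_lt_or_eq.1 hk with hk | rfl
      · exact Or.inl ⟨k, hk, hD⟩
      · exact Or.inr hD
    have := (dsProb_mono hd hP hs).trans (dsProb_union_le hd hP _ _)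
    push_cast
    linarith [h K]

/-- Decoupling: if, conditionally on `φ x`, each factor `h E` has mean at most one, then the product
of the factors has mean at most one, even when `E` is the sequence of the `φ (D i)`. -/
lemma sum_prod_le_of_fiber {X : Type} [Fintype X] [DecidableEq X] {w : X → ℝ} (hw : ∀ x, 0 ≤ w x)
    (hw1 : ∑ x, w x = 1) (φ : X → X) (h : (Fin N → X) → X → ℝ) (hh : ∀ E x, 0 ≤ h E x)
    (hfib : ∀ E y, ∑ x with φ x = y, w x * h E x ≤ ∑ x with φ x = y, w x) :
    ∑ D : Fin N → X, ∏ i, (w (D i) * h (φ ∘ D) (D i)) ≤ 1 := by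
  have hpi : ∀ (E : Fin N → X), (Finset.univ.filter fun D : Fin N → X => φ ∘ D = E) =
      Fintype.piFinset fun i => Finset.univ.filter fun x => φ x = E i := by
    intro E; ext D
    simp [funext_iff]
  calc ∑ D : Fin N → X, ∏ i, (w (D i) * h (φ ∘ D) (D i))
      = ∑ E : Fin N → X, ∑ D with φ ∘ D = E, ∏ i, (w (D i) * h (φ ∘ D) (D i)) :=
        (Finset.sum_fiberwise _ _ _).symm
    _ = ∑ E : Fin N → X, ∑ D with φ ∘ D = E, ∏ i, (w (D i) * h E (D i)) := by
        refine Finset.sum_congr rfl fun E _ => Finset.sum_congr rfl fun D hD => ?_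
        rw [(Finset.mem_filter.1 hD).2]
    _ = ∑ E : Fin N → X, ∏ i, ∑ x with φ x = E i, w x * h E x := by
        refine Finset.sum_congr rfl fun E _ => ?_
        rw [hpi, Finset.prod_univ_sum]
    _ ≤ ∑ E : Fin N → X, ∏ i, ∑ x with φ x = E i, w x := by
        refine Finset.sum_le_sum fun E _ => Finset.prod_le_prod ?_ ?_
        · exact fun i _ => Finset.sum_nonneg fun x _ => mul_nonneg (hw x) (hh E x)
        · exact fun i _ => hfib E (E i)
    _ = 1 := by
        rw [← Fintype.piFinset_univ,
          ← Finset.prod_univ_sum (fun _ => Finset.univ) fun _ y => ∑ x with φ x = y, w x]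
        simp [Finset.sum_fiberwise, hw1]

end Prob

/-! ### Bernstein's inequality with the erased data fixed -/

section Bernstein

variable {𝒮 𝒜 ℬ : Type} [Fintype 𝒮]

lemma Pexp_exp_le_one {p f : 𝒮 → ℝ} (hp : p ∈ stdSimplex ℝ 𝒮) {M lam : ℝ}
    (hf : ∀ t, |f t - Pexp p f| ≤ M) (h0 : 0 ≤ lam) (h1 : lam * M ≤ 1) :
    Pexp p (fun t => Real.exp (lam * (f t - Pexp p f) - lam ^ 2 * varP p f)) ≤ 1 := by
  have hE : Pexp p (fun t => Real.exp (lam * (f t - Pexp p f))) ≤ 1 + lam ^ 2 * varP p f := by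
    have : Pexp p (fun t => Real.exp (lam * (f t - Pexp p f))) ≤
        Pexp p (fun t => 1 + lam * (f t - Pexp p f) + lam ^ 2 * (f t - Pexp p f) ^ 2) := by
      refine Pexp_mono hp fun t => ?_
      have ha : |lam * (f t - Pexp p f)| ≤ 1 := by
        rw [abs_mul, abs_of_nonneg h0]
        exact (mul_le_mul_of_nonneg_left (hf t) h0).trans h1
      have := (abs_le.1 (Real.abs_exp_sub_one_sub_id_le ha)).2
      rw [mul_pow] at this
      linarith
    rw [Pexp_add, Pexp_add, Pexp_const hp, Pexp_const_mul, Pexp_const_mul, Pexp_sub,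
      Pexp_const hp, ← varP_eq hp] at this
    linarith
  have hs : Pexp p (fun t => Real.exp (lam * (f t - Pexp p f) - lam ^ 2 * varP p f)) =
      Real.exp (-(lam ^ 2 * varP p f)) * Pexp p (fun t => Real.exp (lam * (f t - Pexp p f))) := by
    rw [← Pexp_const_mul]; congr 1; ext t
    rw [← Real.exp_add]; congr 1; ring
  rw [hs]
  calc _ ≤ Real.exp (-(lam ^ 2 * varP p f)) * Real.exp (lam ^ 2 * varP p f) :=
        mul_le_mul_of_nonneg_left
          (hE.trans (by linarith [Real.add_one_le_exp (lam ^ 2 * varP p f)])) (Real.exp_pos _).le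
    _ = 1 := by rw [← Real.exp_add]; simp

lemma exists_chernoff_parameter {n v M L : ℝ} (hn : 0 ≤ n) (hv : 0 ≤ v) (hM : 0 < M)
    (hL : 0 < L) : ∃ lam, 0 ≤ lam ∧ lam * M ≤ 1 ∧
      ∀ S, 2 * √(n * v * L) + 2 * M * L < S → L ≤ lam * S - n * (lam ^ 2 * v) := by
  have hrt : √(n * v * L) = √(n * v) * √L := Real.sqrt_mul (mul_nonneg hn hv) _
  have hx := Real.sqrt_nonneg (n * v)
  have hxx := Real.mul_self_sqrt (mul_nonneg hn hv)
  have hy : 0 < √L := Real.sqrt_pos.2 hL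
  have hyy := Real.mul_self_sqrt hL.le
  rw [hrt]
  set x := √(n * v)
  set y := √L
  by_cases h : M * y ≤ x
  · have hxp : 0 < x := lt_of_lt_of_le (by positivity) h
    refine ⟨y / x, by positivity, by rw [div_mul_eq_mul_div, div_le_one hxp]; linarith, ?_⟩
    intro S hS
    have h1 : n * ((y / x) ^ 2 * v) = y * y := by
      field_simp
      nlinarith
    have h2 : 2 * (x * y) ≤ S := by nlinarith
    have h3 : y / x * (2 * (x * y)) = 2 * (y * y) := by field_simp
    have h4 := mul_le_mul_of_nonneg_left h2 (show 0 ≤ y / x by positivity)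
    rw [h1]
    linarith
  · push Not at h
    refine ⟨1 / M, by positivity, by field_simp; rfl, ?_⟩
    intro S hS
    have h1 : n * ((1 / M) ^ 2 * v) ≤ L := by
      have : n * ((1 / M) ^ 2 * v) = x * x / (M * M) := by rw [hxx]; field_simp
      rw [this, div_le_iff₀ (by positivity), ← hyy]
      nlinarith
    have h2 : 2 * M * L ≤ S := by nlinarith [mul_nonneg hx hy.le]
    have h3 : 1 / M * (2 * M * L) = 2 * L := by field_simp
    have h4 := mul_le_mul_of_nonneg_left h2 (show 0 ≤ 1 / M by positivity)
    linarith

variable [Fintype 𝒜] [Fintype ℬ] [DecidableEq 𝒮] [DecidableEq 𝒜] [DecidableEq ℬ] {N : ℕ}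
  {d : 𝒮 → 𝒜 → ℬ → ℝ} {P : 𝒮 → 𝒜 → ℬ → 𝒮 → ℝ}

lemma dsProb_bernstein (hd : IsDist3 d) (hP : IsKernel P) (s : 𝒮) (a : 𝒜) (b : ℬ)
    {M L : ℝ} (hM : 0 < M) (hL : 0 < L) (f : (Fin N → 𝒮 × 𝒜 × ℬ × 𝒮) → 𝒮 → ℝ)
    (hf : ∀ E t, |f E t - Pexp (P s a b) (f E)| ≤ M) :
    dsProb d P {D | 1 ≤ cnt D s a b ∧
      2 * √(cnt D s a b * varP (P s a b) (f (eraseNext s a b ∘ D)) * L) + 2 * M * L <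
        cnt D s a b * (Pexp (Phat D s a b) (f (eraseNext s a b ∘ D)) -
          Pexp (P s a b) (f (eraseNext s a b ∘ D)))} ≤ Real.exp (-L) := by
  have hp := hP s a b
  choose lam hlam0 hlam1 hlam using fun E : Fin N → 𝒮 × 𝒜 × ℬ × 𝒮 =>
    exists_chernoff_parameter (n := cnt E s a b) (v := varP (P s a b) (f E)) (Nat.cast_nonneg _)
      (varP_nonneg hp _) hM hL
  let h : (Fin N → 𝒮 × 𝒜 × ℬ × 𝒮) → 𝒮 × 𝒜 × ℬ × 𝒮 → ℝ := fun E x => Real.exp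
    (if x.1 = s ∧ x.2.1 = a ∧ x.2.2.1 = b then
      lam E * (f E x.2.2.2 - Pexp (P s a b) (f E)) - lam E ^ 2 * varP (P s a b) (f E) else 0)
  have hfib : ∀ E y, ∑ x with eraseNext s a b x = y, stepWeight d P x * h E x ≤
      ∑ x with eraseNext s a b x = y, stepWeight d P x := by
    intro E y
    by_cases hy : y = (s, a, b, s)
    · have hset : (Finset.univ.filter fun x => eraseNext s a b x = y) =
          Finset.univ.image fun t : 𝒮 => (s, a, b, t) := by
        ext ⟨s', a', b', t⟩
        simp only [Finset.mem_filter, Finset.mem_univ, true_and, Finset.mem_image, eraseNext, hy]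
        split_ifs with hc <;> simp only [Prod.ext_iff] at * <;> grind
      have hinj : Function.Injective fun t : 𝒮 => (s, a, b, t) := fun t t' => by simp
      rw [hset, Finset.sum_image hinj.injOn, Finset.sum_image hinj.injOn]
      have h1 := Pexp_exp_le_one hp (hf E) (hlam0 E) (hlam1 E)
      have h2 := mul_le_mul_of_nonneg_left h1 (hd.1 s a b)
      simp only [Pexp, Finset.mul_sum] at h2
      simp only [h, stepWeight, and_self, if_true, ← Finset.mul_sum, hp.2, mul_assoc] at h2 ⊢
      simpa [Pexp] using h2
    · apply le_of_eq
      refine Finset.sum_congr rfl fun x hx => ?_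
      have hx' := (Finset.mem_filter.1 hx).2
      have hne : ¬(x.1 = s ∧ x.2.1 = a ∧ x.2.2.1 = b) := fun hc => by
        rw [eraseNext, if_pos hc] at hx'
        exact hy hx'.symm
      simp only [h, if_neg hne, Real.exp_zero, mul_one]
  have hmain := sum_prod_le_of_fiber (stepWeight_nonneg hd.1 hP) (sum_stepWeight hd hP)
    (eraseNext s a b) h (fun _ _ => (Real.exp_pos _).le) hfib
  have hbound : ∀ D : Fin N → 𝒮 × 𝒜 × ℬ × 𝒮, Set.indicator {D | 1 ≤ cnt D s a b ∧
      2 * √(cnt D s a b * varP (P s a b) (f (eraseNext s a b ∘ D)) * L) + 2 * M * L <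
        cnt D s a b * (Pexp (Phat D s a b) (f (eraseNext s a b ∘ D)) -
          Pexp (P s a b) (f (eraseNext s a b ∘ D)))} (dsWeight d P) D ≤
      Real.exp (-L) * ∏ i, (stepWeight d P (D i) * h (eraseNext s a b ∘ D) (D i)) := by
    intro D
    rw [Finset.prod_mul_distrib, ← dsWeight_eq]
    have hw := dsWeight_nonneg hd.1 hP D
    have hprod : ∏ i, h (eraseNext s a b ∘ D) (D i) = Real.exp (∑ i,
        if (D i).1 = s ∧ (D i).2.1 = a ∧ (D i).2.2.1 = b then
          lam (eraseNext s a b ∘ D) * (f (eraseNext s a b ∘ D) (D i).2.2.2 -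
            Pexp (P s a b) (f (eraseNext s a b ∘ D))) -
          lam (eraseNext s a b ∘ D) ^ 2 * varP (P s a b) (f (eraseNext s a b ∘ D))
        else 0) := (Real.exp_sum _ _).symm
    by_cases hD : D ∈ {D | 1 ≤ cnt D s a b ∧
      2 * √(cnt D s a b * varP (P s a b) (f (eraseNext s a b ∘ D)) * L) + 2 * M * L <
        cnt D s a b * (Pexp (Phat D s a b) (f (eraseNext s a b ∘ D)) -
          Pexp (P s a b) (f (eraseNext s a b ∘ D)))}
    · rw [Set.indicator_of_mem hD, hprod]
      obtain ⟨hc, hS⟩ := hD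
      have hl := hlam (eraseNext s a b ∘ D)
      simp only [cnt_eraseNext] at hl
      have hl' := hl _ hS
      rw [← cnt_mul_Pexp_Phat hc (fun t => lam (eraseNext s a b ∘ D) *
        (f (eraseNext s a b ∘ D) t - Pexp (P s a b) (f (eraseNext s a b ∘ D))) -
          lam (eraseNext s a b ∘ D) ^ 2 * varP (P s a b) (f (eraseNext s a b ∘ D)))]
      have hPh : Phat D s a b ∈ stdSimplex ℝ 𝒮 := by
        have : Nonempty 𝒮 := ⟨s⟩
        exact Phat_isKernel D s a b
      rw [Pexp_sub, Pexp_const_mul, Pexp_sub, Pexp_const hPh, Pexp_const hPh]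
      have : 1 ≤ Real.exp (-L) * Real.exp ((cnt D s a b : ℝ) *
          (lam (eraseNext s a b ∘ D) * (Pexp (Phat D s a b) (f (eraseNext s a b ∘ D)) -
            Pexp (P s a b) (f (eraseNext s a b ∘ D))) -
          lam (eraseNext s a b ∘ D) ^ 2 * varP (P s a b) (f (eraseNext s a b ∘ D)))) := by
        rw [← Real.exp_add]
        refine Real.one_le_exp ?_
        linarith
      nlinarith
    · rw [Set.indicator_of_notMem hD, hprod]
      positivity
  refine (Finset.sum_le_sum fun D _ => hbound D).trans ?_
  rw [← Finset.mul_sum]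
  nlinarith [Real.exp_pos (-L)]

end Bernstein

/-! ### From Bernstein's inequality to the empirical bounds -/

section Empirical

variable {𝒮 𝒜 ℬ : Type} [Fintype 𝒮]

/-- The empirical row `ph` is within Bernstein distance of `p` for both `V` and its squared
deviation from the mean. -/
def Concentrates (ph p V : 𝒮 → ℝ) (n H L : ℝ) : Prop :=
  n * |Pexp ph V - Pexp p V| ≤ 2 * √(n * varP p V * L) + 2 * H * L ∧
  n * |Pexp ph (fun t => (V t - Pexp p V) ^ 2) - varP p V| ≤
    2 * √(n * (H ^ 2 * varP p V) * L) + 2 * H ^ 2 * L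

lemma abs_sub_Pexp_le {p V : 𝒮 → ℝ} (hp : p ∈ stdSimplex ℝ 𝒮) {H : ℝ}
    (hV : ∀ t, V t ∈ Set.Icc 0 H) (t : 𝒮) : |V t - Pexp p V| ≤ H := by
  have h1 := Pexp_mem_Icc hp hV
  exact abs_le.2 ⟨by linarith [(hV t).1, h1.2], by linarith [(hV t).2, h1.1]⟩

lemma sq_dev_mem_Icc {p V : 𝒮 → ℝ} (hp : p ∈ stdSimplex ℝ 𝒮) {H : ℝ}
    (hV : ∀ t, V t ∈ Set.Icc 0 H) (t : 𝒮) : (V t - Pexp p V) ^ 2 ∈ Set.Icc 0 (H ^ 2) :=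
  ⟨sq_nonneg _, sq_le_sq' (abs_le.1 (abs_sub_Pexp_le hp hV t)).1
    (abs_le.1 (abs_sub_Pexp_le hp hV t)).2⟩

lemma varP_sq_dev_le {p V : 𝒮 → ℝ} (hp : p ∈ stdSimplex ℝ 𝒮) {H : ℝ}
    (hV : ∀ t, V t ∈ Set.Icc 0 H) :
    varP p (fun t => (V t - Pexp p V) ^ 2) ≤ H ^ 2 * varP p V := by
  have h1 : Pexp p (fun t => (V t - Pexp p V) ^ 2 * (V t - Pexp p V) ^ 2) ≤
      Pexp p (fun t => H ^ 2 * (V t - Pexp p V) ^ 2) :=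
    Pexp_mono hp fun t => mul_le_mul_of_nonneg_right (sq_dev_mem_Icc hp hV t).2 (sq_nonneg _)
  rw [Pexp_const_mul, ← varP_eq hp] at h1
  rw [varP]
  linarith [sq_nonneg (Pexp p fun t => (V t - Pexp p V) ^ 2)]

lemma two_mul_sqrt_mul_le {x q : ℝ} (hx : 0 ≤ x) (hq : 0 ≤ q) :
    2 * √(x * q) ≤ x / 4 + 4 * q := by
  rw [Real.sqrt_mul hx]
  nlinarith [Real.mul_self_sqrt hx, Real.mul_self_sqrt hq, sq_nonneg (√x / 2 - 2 * √q)]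

/-- Consequences of concentration for the two variances. -/
lemma Concentrates.varP_bounds {ph p V : 𝒮 → ℝ} {n H L : ℝ} (hph : ph ∈ stdSimplex ℝ 𝒮)
    (hp : p ∈ stdSimplex ℝ 𝒮) (hn : 0 < n) (hH : 0 < H) (hL : 0 < L)
    (hV : ∀ t, V t ∈ Set.Icc 0 H) (h : Concentrates ph p V n H L) :
    varP ph V ≤ 5 / 4 * varP p V + 6 * (H ^ 2 * L / n) ∧
    varP p V ≤ 2 * varP ph V + 24 * (H ^ 2 * L / n) := by
  obtain ⟨h1, h2⟩ := h
  have hv := varP_nonneg hp V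
  rw [Pexp_sq_sub hph] at h2
  set v := varP p V
  set vh := varP ph V
  set e := Pexp ph V - Pexp p V with he
  set q := H ^ 2 * L / n with hq
  have hq0 : 0 ≤ q := by positivity
  have hnq : n * q = H ^ 2 * L := by rw [hq]; field_simp
  have hs := two_mul_sqrt_mul_le hv hq0
  have hr2 : √(n * (H ^ 2 * v) * L) = n * √(v * q) := by
    rw [← Real.sqrt_sq hn.le, ← Real.sqrt_mul (sq_nonneg n), Real.sqrt_sq hn.le]
    congr 1
    calc n * (H ^ 2 * v) * L = n * v * (H ^ 2 * L) := by ring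
      _ = n ^ 2 * (v * q) := by rw [← hnq]; ring
  have hr1 : H * √(n * v * L) = n * √(v * q) := by
    rw [← hr2]
    conv_lhs => rw [← Real.sqrt_sq hH.le, ← Real.sqrt_mul (sq_nonneg H)]
    congr 1; ring
  have hX : |vh + e ^ 2 - v| ≤ v / 4 + 6 * q := by
    refine le_of_mul_le_mul_left ?_ hn
    rw [hr2] at h2
    nlinarith
  have hea : |e| ≤ H := by
    have g1 := Pexp_mem_Icc hph hV
    have g2 := Pexp_mem_Icc hp hV
    exact abs_le.2 ⟨by linarith [g1.1, g2.2], by linarith [g1.2, g2.1]⟩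
  have he2 : e ^ 2 ≤ v / 4 + 6 * q := by
    have g1 : H * |e| ≤ v / 4 + 6 * q := by
      refine le_of_mul_le_mul_left ?_ hn
      have := mul_le_mul_of_nonneg_left h1 hH.le
      nlinarith
    rw [← sq_abs]
    nlinarith [abs_nonneg e]
  have hX' := abs_le.1 hX
  constructor
  · nlinarith [sq_nonneg e]
  · linarith

/-- Concentration at `V₀` yields the empirical bounds for all nearby `V`. -/
lemma Concentrates.empirical_bounds {ph p V₀ V : 𝒮 → ℝ} {n N H l : ℝ}
    (hph : ph ∈ stdSimplex ℝ 𝒮) (hp : p ∈ stdSimplex ℝ 𝒮) (hn : 1 ≤ n) (hnN : n ≤ N)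
    (hH : 2 ≤ H) (hl : 1 / 2 ≤ l) (hV₀ : ∀ t, V₀ t ∈ Set.Icc 0 H)
    (hclose : ∀ t, |V t - V₀ t| ≤ 2 / N) (h : Concentrates ph p V₀ n H (5 * l)) :
    |Pexp ph V - Pexp p V| ≤ 100 * (√(varP ph V * l / n) + H * l / n) ∧
    varP ph V ≤ 2 * varP p V + 100 * (H ^ 2 * l / n) := by
  have hn0 : 0 < n := by linarith
  have hN0 : 0 < N := by linarith
  obtain ⟨hb1, hb2⟩ := h.varP_bounds hph hp hn0 (by linarith) (by linarith) hV₀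
  have h1 := h.1
  have hclose' : ∀ t, |V₀ t - V t| ≤ 2 / N := fun t => by rw [abs_sub_comm]; exact hclose t
  have e1 := varP_le_of_abs_sub_le hph hclose
  have e2 := varP_le_of_abs_sub_le hp hclose'
  have e3 := varP_le_of_abs_sub_le hph hclose'
  have e4 := abs_Pexp_sub_le hph hclose
  have e5 := abs_Pexp_sub_le hp hclose
  have hv := varP_nonneg hp V
  have hvh := varP_nonneg hph V
  have hNn : 2 / N ≤ 2 / n := by gcongr
  have hin : 0 < 1 / n := by positivity
  have hin1 : 1 / n ≤ 1 := by rw [div_le_one hn0]; exact hn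
  have hA : 1 / n ≤ H * l / n := by gcongr; nlinarith
  have hB : 2 * (1 / n) ≤ H ^ 2 * l / n := by
    rw [mul_one_div]; gcongr; nlinarith
  have hsq : (2 / N) ^ 2 ≤ 4 * (1 / n) := by
    have : 2 / n = 2 * (1 / n) := by ring
    have h0 : 0 ≤ 2 / N := by positivity
    nlinarith
  have hLq : H ^ 2 * (5 * l) / n = 5 * (H ^ 2 * l / n) := by ring
  rw [hLq] at hb1 hb2
  constructor
  · have hD : |Pexp ph V₀ - Pexp p V₀| ≤
        2 * √(varP p V₀ * (5 * l) / n) + 10 * (H * l / n) := by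
      refine le_of_mul_le_mul_left (h1.trans (le_of_eq ?_)) hn0
      have : √(n * varP p V₀ * (5 * l)) = n * √(varP p V₀ * (5 * l) / n) := by
        conv_rhs => rw [← Real.sqrt_sq hn0.le, ← Real.sqrt_mul (sq_nonneg n), Real.sqrt_sq hn0.le]
        congr 1; field_simp
      rw [this]
      field_simp
      ring
    have hv0 : varP p V₀ ≤ 5 / 2 * varP ph V + 140 * (H ^ 2 * l / n) := by linarith
    have hsqrt : √(varP p V₀ * (5 * l) / n) ≤ 4 * √(varP ph V * l / n) + 30 * (H * l / n) := by
      have h0 : 0 ≤ varP ph V * l / n := by positivity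
      have h0' : 0 ≤ H * l / n := by positivity
      rw [Real.sqrt_le_iff]
      refine ⟨by positivity, ?_⟩
      have g1 : varP p V₀ * (5 * l) / n ≤
          (5 / 2 * varP ph V + 140 * (H ^ 2 * l / n)) * (5 * l) / n := by gcongr
      have g2 : (5 / 2 * varP ph V + 140 * (H ^ 2 * l / n)) * (5 * l) / n =
          25 / 2 * (varP ph V * l / n) + 700 * (H * l / n) ^ 2 := by field_simp; ring
      have g3 := Real.sq_sqrt h0
      nlinarith [mul_nonneg (Real.sqrt_nonneg (varP ph V * l / n)) h0', sq_nonneg (H * l / n)]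
    have htri : |Pexp ph V - Pexp p V| ≤ |Pexp ph V - Pexp ph V₀| + |Pexp ph V₀ - Pexp p V₀| +
        |Pexp p V - Pexp p V₀| := by
      rw [abs_sub_comm (Pexp p V)]
      refine (abs_sub_le _ (Pexp p V₀) _).trans ?_
      exact add_le_add_left (abs_sub_le _ _ _) _
    have h2n : 2 / n = 2 * (1 / n) := by ring
    have := Real.sqrt_nonneg (varP ph V * l / n)
    linarith
  · linarith

variable [Fintype 𝒜] [Fintype ℬ] [DecidableEq 𝒮] [DecidableEq 𝒜] [DecidableEq ℬ] {N : ℕ}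
  {d : 𝒮 → 𝒜 → ℬ → ℝ} {P : 𝒮 → 𝒜 → ℬ → 𝒮 → ℝ}

lemma dsProb_not_concentrates_le (hd : IsDist3 d) (hP : IsKernel P) (s : 𝒮) (a : 𝒜) (b : ℬ)
    {H L : ℝ} (hH : 0 < H) (hL : 0 < L) (F : (Fin N → 𝒮 × 𝒜 × ℬ × 𝒮) → 𝒮 → ℝ)
    (hF : ∀ E t, F E t ∈ Set.Icc 0 H) :
    dsProb d P {D | 1 ≤ cnt D s a b ∧ ¬Concentrates (Phat D s a b) (P s a b)
      (F (eraseNext s a b ∘ D)) (cnt D s a b) H L} ≤ 4 * Real.exp (-L) := by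
  have hp := hP s a b
  have hdev : ∀ E t, |(F E t - Pexp (P s a b) (F E)) ^ 2 -
      Pexp (P s a b) (fun t => (F E t - Pexp (P s a b) (F E)) ^ 2)| ≤ H ^ 2 := fun E t =>
    abs_sub_Pexp_le hp (sq_dev_mem_Icc hp (hF E)) t
  have b1 := dsProb_bernstein hd hP s a b hH hL F fun E t => abs_sub_Pexp_le hp (hF E) t
  have b2 := dsProb_bernstein hd hP s a b hH hL (fun E t => -F E t) fun E t => by
    rw [Pexp_neg, neg_sub_neg, abs_sub_comm]; exact abs_sub_Pexp_le hp (hF E) t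
  have b3 := dsProb_bernstein hd hP s a b (pow_pos hH 2) hL
    (fun E t => (F E t - Pexp (P s a b) (F E)) ^ 2) hdev
  have b4 := dsProb_bernstein hd hP s a b (pow_pos hH 2) hL
    (fun E t => -(F E t - Pexp (P s a b) (F E)) ^ 2) fun E t => by
      rw [Pexp_neg, neg_sub_neg, abs_sub_comm]; exact hdev E t
  simp only [Pexp_neg, varP_neg, ← varP_eq hp] at b2 b3 b4
  refine (dsProb_mono hd.1 hP ?_).trans
    ((dsProb_union_le hd.1 hP _ _).trans (add_le_add
      ((dsProb_union_le hd.1 hP _ _).trans (add_le_add b1 b2))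
      ((dsProb_union_le hd.1 hP _ _).trans (add_le_add b3 b4))) |>.trans (by linarith))
  rintro D ⟨hc, hnot⟩
  by_contra hcon
  simp only [Set.mem_union, Set.mem_ofPred_eq, hc, true_and, not_or, not_lt] at hcon
  obtain ⟨⟨c1, c2⟩, c3, c4⟩ := hcon
  have hn : (0 : ℝ) ≤ cnt D s a b := Nat.cast_nonneg _
  have hle : √(cnt D s a b * varP (P s a b) (fun t => (F (eraseNext s a b ∘ D) t -
      Pexp (P s a b) (F (eraseNext s a b ∘ D))) ^ 2) * L) ≤
      √(cnt D s a b * (H ^ 2 * varP (P s a b) (F (eraseNext s a b ∘ D))) * L) :=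
    Real.sqrt_le_sqrt (mul_le_mul_of_nonneg_right
      (mul_le_mul_of_nonneg_left (varP_sq_dev_le hp (hF _)) hn) hL.le)
  refine hnot ⟨?_, ?_⟩
  · rw [← abs_of_nonneg hn, ← abs_mul, abs_of_nonneg hn]
    exact abs_le.2 ⟨by linarith, by linarith⟩
  · rw [← abs_of_nonneg hn, ← abs_mul, abs_of_nonneg hn]
    exact abs_le.2 ⟨by linarith, by linarith⟩

end Empirical

lemma abs_le_of_supNormS_le {𝒮 : Type} [Fintype 𝒮] {f : 𝒮 → ℝ} {ε : ℝ} (h : supNormS f ≤ ε)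
    (t : 𝒮) : |f t| ≤ ε :=
  (le_ciSup (f := fun s => |f s|) (Set.finite_range _).bddAbove t).trans h

/-- The union bound over the two covers fits into the failure probability `δ`. -/
lemma union_bound_le {H δ : ℝ} {N : ℕ} (hH : 2 ≤ H) (hδ : 0 < δ) (hδ1 : δ < 1) (hN : 1 ≤ N) :
    2 * ((⌊(N : ℝ) * H⌋₊ + 1 : ℕ) * (4 * Real.exp (-(5 * Real.log (N * H / δ))))) ≤ δ := by
  have hN' : (1 : ℝ) ≤ N := by exact_mod_cast hN
  have hNH : 2 ≤ N * H := by nlinarith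
  have hx : 0 < N * H / δ := by positivity
  have hexp : Real.exp (-(5 * Real.log (N * H / δ))) = (δ / (N * H)) ^ 5 := by
    have : -(5 * Real.log (N * H / δ)) = (5 : ℕ) * Real.log (δ / (N * H)) := by
      rw [← inv_div, Real.log_inv]; push_cast; ring
    rw [this, Real.exp_nat_mul, Real.exp_log (by positivity)]
  have hfl : ((⌊(N : ℝ) * H⌋₊ + 1 : ℕ) : ℝ) ≤ 2 * (N * H) := by
    push_cast
    linarith [Nat.floor_le (show 0 ≤ (N : ℝ) * H by positivity)]
  have hy : δ / (N * H) ≤ 1 / 2 := by rw [div_le_div_iff₀ (by positivity) two_pos]; linarith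
  have hy0 : 0 ≤ δ / (N * H) := by positivity
  have hyδ : N * H * (δ / (N * H)) = δ := by field_simp
  rw [hexp]
  set y := δ / (N * H)
  have hy4 : y ^ 4 ≤ (1 / 2) ^ 4 := pow_le_pow_left₀ hy0 hy 4
  calc _ ≤ 2 * (2 * (N * H) * (4 * y ^ 5)) := by gcongr
    _ = 16 * (N * H * y) * y ^ 4 := by ring
    _ ≤ 16 * (N * H * y) * (1 / 2) ^ 4 := by gcongr
    _ = δ := by rw [hyδ]; ring

end ZSMG


open ZSMG in
/-- Lemma 3, leave-one-out: Bernstein-type bound on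
`(P̂ − P)Ṽ` and closeness of the empirical variance, uniformly over all `Ṽ`
close to the value functions of the fixed points of the pessimistic operators. -/
theorem statement6 :
    ∃ Cb : ℝ, 0 < Cb ∧ ∃ C : ℝ, 0 < C ∧
      ∀ (𝒮 𝒜 ℬ : Type) [Fintype 𝒮] [Fintype 𝒜] [Fintype ℬ]
        [DecidableEq 𝒮] [DecidableEq 𝒜] [DecidableEq ℬ]
        [Nonempty 𝒮] [Nonempty 𝒜] [Nonempty ℬ],
      ∀ γ δ : ℝ, 1 / 2 ≤ γ → γ < 1 → δ ∈ Set.Ioo (0 : ℝ) 1 →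
      ∀ P : 𝒮 → 𝒜 → ℬ → 𝒮 → ℝ, IsKernel P →
      ∀ r : 𝒮 → 𝒜 → ℬ → ℝ, IsReward r →
      ∀ db : 𝒮 → 𝒜 → ℬ → ℝ, IsDist3 db →
      ∀ N : ℕ, ∀ (s : 𝒮) (a : 𝒜) (b : ℬ),
        1 - δ ≤ dsProb db P {D : Fin N → 𝒮 × 𝒜 × ℬ × 𝒮 |
          1 ≤ cnt D s a b →
          ∀ Qm Qp : 𝒮 → 𝒜 → ℬ → ℝ,
            (∀ s' a' b', Qm s' a' b' ∈ Set.Icc (0 : ℝ) (1 / (1 - γ))) →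
            TpeMinus γ δ Cb N (cnt D) (Phat D) (rhat r D) Qm = Qm →
            (∀ s' a' b', Qp s' a' b' ∈ Set.Icc (0 : ℝ) (1 / (1 - γ))) →
            TpePlus γ δ Cb N (cnt D) (Phat D) (rhat r D) Qp = Qp →
          ∀ V : 𝒮 → ℝ,
            (∀ s', V s' ∈ Set.Icc (0 : ℝ) (1 / (1 - γ))) →
            min (supNormS fun s' => V s' - valQ Qm s')
                (supNormS fun s' => V s' - valQ Qp s') ≤ 1 / (N : ℝ) →
            |Pexp (Phat D s a b) V - Pexp (P s a b) V| ≤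
              C * (Real.sqrt (varP (Phat D s a b) V *
                    Real.log ((N : ℝ) / ((1 - γ) * δ)) / (cnt D s a b : ℝ))
                + Real.log ((N : ℝ) / ((1 - γ) * δ)) / ((1 - γ) * (cnt D s a b : ℝ))) ∧
            varP (Phat D s a b) V ≤ 2 * varP (P s a b) V +
              C * Real.log ((N : ℝ) / ((1 - γ) * δ)) / ((1 - γ) ^ 2 * (cnt D s a b : ℝ))} := by
  refine ⟨1, one_pos, 100, by norm_num, ?_⟩
  intro 𝒮 𝒜 ℬ _ _ _ _ _ _ _ _ _ γ δ hγ2 hγ hδ P hP r _ db hdb N s a b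
  obtain ⟨hδ0, hδ1⟩ := hδ
  rcases Nat.eq_zero_or_pos N with rfl | hN
  · refine le_trans ?_ (dsProb_mono hdb.1 hP (E := Set.univ) fun D _ hc => ?_)
    · simp only [dsProb, Set.indicator_univ, sum_dsWeight hdb hP]
      linarith
    · have := cnt_le D s a b
      omega
  have hN' : (1 : ℝ) ≤ N := by exact_mod_cast hN
  have hγ0 : 0 < 1 - γ := by linarith
  have hH : 2 ≤ 1 / (1 - γ) := by rw [le_div_iff₀ hγ0]; linarith
  have hlogeq : (N : ℝ) / ((1 - γ) * δ) = N * (1 / (1 - γ)) / δ := by field_simp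
  have hl : 1 / 2 ≤ Real.log ((N : ℝ) / ((1 - γ) * δ)) := by
    have h2 : 2 ≤ (N : ℝ) / ((1 - γ) * δ) := by
      rw [hlogeq, le_div_iff₀ hδ0]
      nlinarith
    linarith [Real.log_two_gt_d9, Real.log_le_log two_pos h2]
  have hl0 : 0 ≤ Real.log ((N : ℝ) / ((1 - γ) * δ)) := by linarith
  obtain ⟨Fm, hFm, hcovm⟩ := exists_cover hN hγ s a b
    (fun D => TpeMinus γ δ 1 N (cnt D) (Phat D) (rhat r D))
    (fun D Q s' a' b' h => TpeMinus_eraseNext D r γ δ 1 Q s a b h)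
    (fun D Q Q' hQ hQ' ε hε => abs_TpeMinus_sub_le (Phat_isKernel D) hγ2 hγ zero_le_one hl0
      hQ hQ' hε)
  obtain ⟨Fp, hFp, hcovp⟩ := exists_cover hN hγ s a b
    (fun D => TpePlus γ δ 1 N (cnt D) (Phat D) (rhat r D))
    (fun D Q s' a' b' h => TpePlus_eraseNext D r γ δ 1 Q s a b h)
    (fun D Q Q' hQ hQ' ε hε => abs_TpePlus_sub_le (Phat_isKernel D) hγ2 hγ zero_le_one hl0
      hQ hQ' hε)
  let bad : (ℕ → (Fin N → 𝒮 × 𝒜 × ℬ × 𝒮) → 𝒮 → ℝ) → ℕ → Set (Fin N → 𝒮 × 𝒜 × ℬ × 𝒮) :=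
    fun F k => {D | 1 ≤ cnt D s a b ∧ ¬Concentrates (Phat D s a b) (P s a b)
      (F k (eraseNext s a b ∘ D)) (cnt D s a b) (1 / (1 - γ))
      (5 * Real.log ((N : ℝ) / ((1 - γ) * δ)))}
  let B : (ℕ → (Fin N → 𝒮 × 𝒜 × ℬ × 𝒮) → 𝒮 → ℝ) → Set (Fin N → 𝒮 × 𝒜 × ℬ × 𝒮) :=
    fun F => {D | ∃ k < ⌊(N : ℝ) * (1 / (1 - γ))⌋₊ + 1, D ∈ bad F k}
  have hB : ∀ F : ℕ → (Fin N → 𝒮 × 𝒜 × ℬ × 𝒮) → 𝒮 → ℝ,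
      (∀ k E t, F k E t ∈ Set.Icc 0 (1 / (1 - γ))) →
      dsProb db P (B F) ≤ (⌊(N : ℝ) * (1 / (1 - γ))⌋₊ + 1 : ℕ) *
        (4 * Real.exp (-(5 * Real.log ((N : ℝ) / ((1 - γ) * δ))))) := fun F hF =>
    dsProb_biUnion_le hdb.1 hP _ _ fun k => dsProb_not_concentrates_le hdb hP s a b
      (by linarith) (by linarith) (F k) (hF k)
  have hunion : dsProb db P (B Fm ∪ B Fp) ≤ δ := by
    have h1 := dsProb_union_le hdb.1 hP (B Fm) (B Fp)
    have h2 := union_bound_le (N := N) hH hδ0 hδ1 hN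
    rw [← hlogeq] at h2
    linarith [hB Fm hFm, hB Fp hFp]
  refine le_trans ?_ (dsProb_mono hdb.1 hP (E := (B Fm ∪ B Fp)ᶜ) ?_)
  · rw [dsProb_compl hdb hP]
    linarith
  intro D hD hc Qm Qp hQm hfixm hQp hfixp V _ hclose
  have hex : ∃ V₀ : 𝒮 → ℝ, (∀ t, V₀ t ∈ Set.Icc 0 (1 / (1 - γ))) ∧
      (∀ t, |V t - V₀ t| ≤ 2 / N) ∧ Concentrates (Phat D s a b) (P s a b) V₀ (cnt D s a b)
        (1 / (1 - γ)) (5 * Real.log ((N : ℝ) / ((1 - γ) * δ))) := by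
    have hadd : (2 : ℝ) / N = 1 / N + 1 / N := by ring
    rcases min_le_iff.1 hclose with h | h
    · obtain ⟨k, hk, hcov⟩ := hcovm D Qm hQm hfixm
      refine ⟨Fm k (eraseNext s a b ∘ D), hFm k _, fun t => ?_, ?_⟩
      · rw [hadd]
        exact (abs_sub_le _ _ _).trans (add_le_add (abs_le_of_supNormS_le h t) (hcov t))
      · by_contra hnot
        exact hD (Or.inl ⟨k, hk, hc, hnot⟩)
    · obtain ⟨k, hk, hcov⟩ := hcovp D Qp hQp hfixp
      refine ⟨Fp k (eraseNext s a b ∘ D), hFp k _, fun t => ?_, ?_⟩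
      · rw [hadd]
        exact (abs_sub_le _ _ _).trans (add_le_add (abs_le_of_supNormS_le h t) (hcov t))
      · by_contra hnot
        exact hD (Or.inr ⟨k, hk, hc, hnot⟩)
  obtain ⟨V₀, hV₀, hVV₀, hconc⟩ := hex
  have hc' : (1 : ℝ) ≤ cnt D s a b := by exact_mod_cast hc
  have hcN : (cnt D s a b : ℝ) ≤ N := by exact_mod_cast cnt_le D s a b
  obtain ⟨r1, r2⟩ := hconc.empirical_bounds (Phat_isKernel D s a b) (hP s a b) hc' hcN hH hl
    hV₀ hVV₀
  constructor
  · convert r1 using 3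
    field_simp
  · convert r2 using 2
    field_simp
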